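/- arXiv:1201.2219 — 3 statements merged into one kernel-verified Lean document; each statement's English description precedes it below -/
import Mathlib

section
/- Let m ≥ 0 and let σ, δ : ℝ^{m+2} → ℝ^{m+2} be the linear involutions σ(z₁,z₂,z₃,…,z_{m+2}) = (−z₁,z₂,z₃,…,z_{m+2}) and δ(z₁,z₂,z₃,…,z_{m+2}) = (z₁,−z₂,z₃,…,z_{m+2}). Let X be a C^∞ vector field on an open neighborhood U of 0 in ℝ^{m+2} with σ(U) = U and δ(U) = U such that: (1) X(z) = 0 for every z ∈ Σ := {z ∈ U : z₁ = z₂ = 0}; (2) X(σ(z)) = σ(X(z)) and X(δ(z)) = δ(X(z)) for all z ∈ U; (3) X = L + Y, where L is the linear vector field L(z) = z₁ e₁ − z₂ e₂ and Y is flat along Σ. Then X is locally smoothly linearizable at 0 in a σ- and δ-equivariant way: there exist an open neighborhood W ⊆ U of 0 with σ(W) = W and δ(W) = W, and a C^∞ diffeomorphism ψ from W onto an open neighborhood of 0 in ℝ^{m+2}, such that ψ(0) = 0, ψ∘σ = σ∘ψ and ψ∘δ = δ∘ψ on W, and Dψ(z)(X(z)) = L(ψ(z)) for all z ∈ W. 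-/
open scoped ContDiff

namespace NambuLin

variable {m : ℕ}

/-- The linear involution `σ(z₁,z₂,z₃,…) = (−z₁,z₂,z₃,…)` of `ℝ^{m+2}`. -/
def sig (z : Fin (m + 2) → ℝ) : Fin (m + 2) → ℝ :=
  fun i => if i = 0 then -z i else z i

/-- The linear involution `δ(z₁,z₂,z₃,…) = (z₁,−z₂,z₃,…)` of `ℝ^{m+2}`. -/
def del (z : Fin (m + 2) → ℝ) : Fin (m + 2) → ℝ :=
  fun i => if i = 1 then -z i else z i

/-- The linear vector field `L(z) = z₁ e₁ − z₂ e₂` on `ℝ^{m+2}`. -/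
def Lvf (z : Fin (m + 2) → ℝ) : Fin (m + 2) → ℝ :=
  fun i => if i = 0 then z 0 else if i = 1 then -z 1 else 0

/-- `φ` is a `C^∞` diffeomorphism from the open set `W` onto the open set `φ '' W`. -/
def IsSmoothDiffeoOn {N : ℕ} (φ : (Fin N → ℝ) → (Fin N → ℝ)) (W : Set (Fin N → ℝ)) : Prop :=
  IsOpen W ∧ IsOpen (φ '' W) ∧ ContDiffOn ℝ ∞ φ W ∧
    ∃ ψ : (Fin N → ℝ) → (Fin N → ℝ), ContDiffOn ℝ ∞ ψ (φ '' W) ∧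
      (∀ x ∈ W, ψ (φ x) = x) ∧ (∀ y ∈ φ '' W, φ (ψ y) = y)

section FlowPart
set_option linter.unusedSectionVars false
open Set Filter Topology MeasureTheory

/-- Time interval for rescaled trajectories. -/
abbrev TI : Type := Icc (-1 : ℝ) 1

variable {E : Type} [NormedAddCommGroup E] [NormedSpace ℝ E]

/-- Pointwise application of operator-valued curves. -/
noncomputable def appOp (E G : Type) [NormedAddCommGroup E] [NormedSpace ℝ E]
    [NormedAddCommGroup G] [NormedSpace ℝ G] :
    C(TI, E →L[ℝ] G) →L[ℝ] C(TI, E) →L[ℝ] C(TI, G) :=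
  LinearMap.mkContinuous₂
    (LinearMap.mk₂ ℝ (fun (A : C(TI, E →L[ℝ] G)) (q : C(TI, E)) =>
      (⟨fun s => A s (q s), A.continuous.clm_apply q.continuous⟩ : C(TI, G)))
      (by intros; ext; simp) (by intros; ext; simp) (by intros; ext; simp)
      (by intros; ext; simp)) 1
    (by
      intro A q
      refine (ContinuousMap.norm_le _ (by positivity)).2 fun s => ?_
      calc ‖A s (q s)‖ ≤ ‖A s‖ * ‖q s‖ := (A s).le_opNorm _
        _ ≤ 1 * ‖A‖ * ‖q‖ := by
          rw [one_mul]
          gcongr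
          · exact A.norm_coe_le_norm s
          · exact q.norm_coe_le_norm s)

lemma appOp_apply {G : Type} [NormedAddCommGroup G] [NormedSpace ℝ G]
    (A : C(TI, E →L[ℝ] G)) (q : C(TI, E)) (s : TI) : appOp E G A q s = A s (q s) := rfl

/-- Superposition operator. -/
def nem {G : Type} [NormedAddCommGroup G] (V : E → G) (hV : Continuous V) (q : C(TI, E)) :
    C(TI, G) := (⟨V, hV⟩ : C(E, G)).comp q

lemma nem_apply {G : Type} [NormedAddCommGroup G] (V : E → G) (hV : Continuous V) (q : C(TI, E))
    (s : TI) : nem V hV q s = V (q s) := rfl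

lemma nem_continuous {G : Type} [NormedAddCommGroup G] (V : E → G) (hV : Continuous V) :
    Continuous (nem V hV) := ContinuousMap.continuous_postcomp _

lemma nem_hasFDerivAt {G : Type} [NormedAddCommGroup G] [NormedSpace ℝ G] (V : E → G)
    (hV : ContDiff ℝ ∞ V) (hDV : Continuous (fderiv ℝ V)) (q : C(TI, E)) :
    HasFDerivAt (nem V hV.continuous) (appOp E G (nem (fderiv ℝ V) hDV q)) q := by
  rw [hasFDerivAt_iff_isLittleO, Asymptotics.isLittleO_iff]
  intro c hc
  have h1 := (nem_continuous (fderiv ℝ V) hDV).tendsto q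
  rw [Metric.tendsto_nhds] at h1
  obtain ⟨δ, hδ, hball⟩ := Metric.eventually_nhds_iff_ball.1 (h1 c hc)
  filter_upwards [Metric.ball_mem_nhds q hδ] with q' hq'
  refine (ContinuousMap.norm_le _ (by positivity)).2 fun s => ?_
  have key := Convex.norm_image_sub_le_of_norm_fderiv_le' (𝕜 := ℝ) (f := V) (s := segment ℝ (q s) (q' s))
    (φ := fderiv ℝ V (q s)) (C := c) (x := q s) (y := q' s)
    (fun x _ => (hV.differentiable (by simp)).differentiableAt) ?_ (convex_segment _ _)
    (left_mem_segment _ _ _) (right_mem_segment _ _ _)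
  · refine (le_trans (le_of_eq ?_) key).trans ?_
    · rfl
    · gcongr
      exact (q' - q).norm_coe_le_norm s
  · intro x hx
    obtain ⟨a, ha, rfl⟩ := segment_eq_image' ℝ (q s) (q' s) ▸ hx
    have hmem : q + a • (q' - q) ∈ Metric.ball q δ := by
      rw [mem_ball_iff_norm] at hq' ⊢
      rw [add_sub_cancel_left, norm_smul, Real.norm_eq_abs, abs_of_nonneg ha.1]
      nlinarith [norm_nonneg (q' - q), ha.2]
    have h2 := hball _ hmem
    rw [dist_eq_norm] at h2
    exact ((nem (fderiv ℝ V) hDV (q + a • (q' - q)) - nem (fderiv ℝ V) hDV q).norm_coe_le_norm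
      s).trans h2.le

lemma nem_contDiff_nat (n : ℕ) : ∀ (G : Type) [NormedAddCommGroup G] [NormedSpace ℝ G] (V : E → G)
    (hV : ContDiff ℝ ∞ V), ContDiff ℝ n (nem V hV.continuous) := by
  induction n with
  | zero => intro G _ _ V hV; exact contDiff_zero.2 (nem_continuous _ _)
  | succ n ih =>
    intro G _ _ V hV
    have hD : ContDiff ℝ ∞ (fderiv ℝ V) := hV.fderiv_right (by simp)
    have := ih _ _ hD
    have h0 : ContDiff ℝ n (fun A => appOp E G A) := by fun_prop
    exact contDiff_succ_iff_hasFDerivAt.2 ⟨fun q => appOp E G (nem (fderiv ℝ V) hD.continuous q),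
      h0.comp this, fun q => nem_hasFDerivAt V hV hD.continuous q⟩

lemma nem_contDiff {G : Type} [NormedAddCommGroup G] [NormedSpace ℝ G] (V : E → G)
    (hV : ContDiff ℝ ∞ V) : ContDiff ℝ ∞ (nem V hV.continuous) :=
  contDiff_infty.2 fun n => nem_contDiff_nat n G V hV

/-- The extended curve. -/
noncomputable def extc (q : C(TI, E)) (τ : ℝ) : E := IccExtend (by norm_num : (-1 : ℝ) ≤ 1) q τ

lemma extc_cont (q : C(TI, E)) : Continuous (extc q) := q.continuous.Icc_extend'

lemma extc_of_mem (q : C(TI, E)) {τ : ℝ} (h : τ ∈ Icc (-1 : ℝ) 1) : extc q τ = q ⟨τ, h⟩ :=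
  IccExtend_of_mem _ _ h

lemma extc_norm (q : C(TI, E)) (τ : ℝ) : ‖extc q τ‖ ≤ ‖q‖ := q.norm_coe_le_norm _

variable [CompleteSpace E]

/-- The primitive. -/
noncomputable def primOp (E : Type) [NormedAddCommGroup E] [NormedSpace ℝ E] [CompleteSpace E] :
    C(TI, E) →L[ℝ] C(TI, E) :=
  LinearMap.mkContinuous
    { toFun := fun q => ⟨fun s => ∫ τ in (0 : ℝ)..s, extc q τ,
        (intervalIntegral.continuous_primitive
          (fun a b => (extc_cont q).intervalIntegrable a b) 0).comp continuous_subtype_val⟩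
      map_add' := by
        intro p q; ext s
        exact intervalIntegral.integral_add ((extc_cont p).intervalIntegrable _ _)
          ((extc_cont q).intervalIntegrable _ _)
      map_smul' := by
        intro c q; ext s
        exact intervalIntegral.integral_smul c (extc q) } 1
    (by
      intro q
      refine (ContinuousMap.norm_le _ (by positivity)).2 fun s => ?_
      have := intervalIntegral.norm_integral_le_of_norm_le_const (a := 0) (b := (s : ℝ))
        (f := extc q) (C := ‖q‖) (fun τ _ => extc_norm q τ)
      refine this.trans ?_
      rw [sub_zero, mul_comm]
      gcongr
      exact abs_le.2 s.2)

lemma primOp_apply (q : C(TI, E)) (s : TI) : primOp E q s = ∫ τ in (0 : ℝ)..s, extc q τ := rfl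

lemma primOp_norm : ‖primOp E‖ ≤ 1 := LinearMap.mkContinuous_norm_le _ (by norm_num) _

end FlowPart

section FlowPart2
set_option linter.unusedSectionVars false
open Set Filter Topology MeasureTheory
open scoped NNReal

variable {E : Type} [NormedAddCommGroup E] [NormedSpace ℝ E] [CompleteSpace E]

lemma one_sub_invertible {B : Type} [NormedAddCommGroup B] [NormedSpace ℝ B] [CompleteSpace B]
    (A : B →L[ℝ] B) (hA : ‖A‖ < 1) : (1 - A).IsInvertible := by
  obtain ⟨u, hu⟩ := isUnit_one_sub_of_norm_lt_one hA
  exact ⟨ContinuousLinearEquiv.ofUnit u, hu⟩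

lemma opnorm_smul_le {B : Type} [NormedAddCommGroup B] [NormedSpace ℝ B]
    (A : B →L[ℝ] B) (t K : ℝ) (hA : ‖A‖ ≤ K) : ‖t • A‖ ≤ |t| * K := by
  rw [norm_smul, Real.norm_eq_abs]; gcongr

/-- Picard operator. -/
noncomputable def picOp (V : E → E) (hV : Continuous V) (t : ℝ) (z : E) (q : C(TI, E)) :
    C(TI, E) := ContinuousMap.const TI z + t • primOp E (nem V hV q)

lemma picOp_apply (V : E → E) (hV : Continuous V) (t : ℝ) (z : E) (q : C(TI, E)) (s : TI) :
    picOp V hV t z q s = z + t • ∫ τ in (0 : ℝ)..s, V (extc q τ) := rfl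

lemma picOp_lip (V : E → E) {K : ℝ≥0} (hK : LipschitzWith K V) (t : ℝ) (z : E) :
    LipschitzWith (‖t‖₊ * K) (picOp V hK.continuous t z) := by
  refine LipschitzWith.of_dist_le_mul fun q q' => ?_
  rw [dist_eq_norm, dist_eq_norm]
  have h1 : picOp V hK.continuous t z q - picOp V hK.continuous t z q'
      = t • primOp E (nem V hK.continuous q - nem V hK.continuous q') := by
    simp only [picOp, map_sub, smul_sub]; abel
  rw [h1, norm_smul]
  have h2 : ‖primOp E (nem V hK.continuous q - nem V hK.continuous q')‖ ≤ K * ‖q - q'‖ := by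
    refine ((primOp E).le_of_opNorm_le primOp_norm _).trans ?_
    rw [one_mul]
    refine (ContinuousMap.norm_le _ (by positivity)).2 fun s => ?_
    have := hK.dist_le_mul (q s) (q' s)
    rw [dist_eq_norm, dist_eq_norm] at this
    refine this.trans ?_
    gcongr
    exact (q - q').norm_coe_le_norm s
  push_cast
  rw [mul_assoc]
  gcongr

lemma picOp_contr (V : E → E) {K : ℝ≥0} (hK : LipschitzWith K V) {t : ℝ}
    (ht : |t| < 1 / (K + 1)) (z : E) :
    ContractingWith (‖t‖₊ * K) (picOp V hK.continuous t z) := by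
  refine ⟨?_, picOp_lip V hK t z⟩
  rw [← NNReal.coe_lt_coe]
  push_cast
  rw [lt_div_iff₀ (by positivity)] at ht
  rw [Real.norm_eq_abs]
  nlinarith [abs_nonneg t]

lemma picOp_rescale (V : E → E) (hV : Continuous V) (t : ℝ) (z : E) (q : C(TI, E))
    (hq : picOp V hV t z q = q) (s : TI) :
    ∃ r : C(TI, E), picOp V hV (t * s) z r = r ∧ r ⟨1, by norm_num, le_rfl⟩ = q s := by
  have hs := s.2
  have hmem : ∀ σ : TI, (s : ℝ) * σ ∈ Icc (-1 : ℝ) 1 := by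
    intro σ
    have h1 := abs_le.2 hs
    have h2 := abs_le.2 σ.2
    rw [mem_Icc, ← abs_le, abs_mul]
    exact mul_le_one₀ h1 (abs_nonneg _) h2
  refine ⟨⟨fun σ => q ⟨(s : ℝ) * σ, hmem σ⟩, by fun_prop⟩, ?_, ?_⟩
  · ext σ
    rw [picOp_apply]
    simp only [ContinuousMap.coe_mk]
    conv_rhs => rw [← hq, picOp_apply]
    congr 1
    rw [mul_smul]
    congr 1
    have := intervalIntegral.smul_integral_comp_mul_left (a := 0) (b := (σ : ℝ))
      (fun τ => V (extc q τ)) (s : ℝ)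
    rw [mul_zero] at this
    rw [← this]
    congr 1
    apply intervalIntegral.integral_congr
    intro τ hτ
    have hτ' : τ ∈ Icc (-1 : ℝ) 1 := by
      have h0 : (0 : ℝ) ∈ Icc (-1 : ℝ) 1 := by norm_num
      exact (ordConnected_Icc.uIcc_subset h0 σ.2) hτ
    simp only
    rw [extc_of_mem _ hτ', extc_of_mem _ (hmem ⟨τ, hτ'⟩)]
    rfl
  · simp

theorem exists_flow (V : E → E) (hV : ContDiff ℝ ∞ V) (K : ℝ≥0) (hK : LipschitzWith K V) :
    ∃ ε > 0, ∃ φ : ℝ × E → E, ContDiffOn ℝ ∞ φ {x | |x.1| < ε} ∧ (∀ z, φ (0, z) = z) ∧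
      (∀ t z, |t| < ε → HasDerivAt (fun s => φ (s, z)) (V (φ (t, z))) t) := by
  classical
  set ε : ℝ := 1 / (K + 1) with hε
  have hε0 : 0 < ε := by positivity
  have hex : ∀ x : ℝ × E, ∃ q : C(TI, E), |x.1| < ε → picOp V hK.continuous x.1 x.2 q = q := by
    intro x
    by_cases hx : |x.1| < ε
    · have hc := picOp_contr V hK hx x.2
      exact ⟨_, fun _ => hc.fixedPoint_isFixedPt⟩
    · exact ⟨0, fun h => absurd h hx⟩
  choose Q hQ using hex
  have huniq : ∀ x : ℝ × E, |x.1| < ε → ∀ r, picOp V hK.continuous x.1 x.2 r = r → r = Q x := by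
    intro x hx r hr
    have hc := picOp_contr V hK hx x.2
    exact hc.fixedPoint_unique' hr (hQ x hx)
  set one : TI := ⟨1, by norm_num, le_rfl⟩
  have hopen : IsOpen {x : ℝ × E | |x.1| < ε} := isOpen_lt (by fun_prop) continuous_const
  -- smoothness of Q
  have hQs : ∀ x : ℝ × E, |x.1| < ε → ContDiffAt ℝ ∞ Q x := by
    intro x hx
    let f : (ℝ × E) × C(TI, E) → C(TI, E) := fun u =>
      u.2 - (ContinuousMap.const TI u.1.2 + u.1.1 • primOp E (nem V hK.continuous u.2))
    have hconst : ContDiff ℝ ∞ (fun z : E => ContinuousMap.const TI z) := by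
      let A : E →L[ℝ] C(TI, E) := LinearMap.mkContinuous
        { toFun := fun z => ContinuousMap.const TI z
          map_add' := by intros; rfl
          map_smul' := by intros; rfl } 1 (by
            intro z
            refine (ContinuousMap.norm_le _ (by positivity)).2 fun s => ?_
            exact le_of_eq (one_mul ‖z‖).symm)
      exact A.contDiff
    have hN := nem_contDiff V hV
    have hfs : ContDiff ℝ ∞ f := by
      refine contDiff_snd.sub ((hconst.comp (contDiff_snd.comp contDiff_fst)).add ?_)
      exact (contDiff_fst.comp contDiff_fst).smul ((primOp E).contDiff.comp (hN.comp contDiff_snd))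
    have hDV : Continuous (fderiv ℝ V) := hV.continuous_fderiv (by simp)
    have cdf : ContDiffAt ℝ ∞ f (x, Q x) := hfs.contDiffAt
    let A : C(TI, E) →L[ℝ] C(TI, E) :=
      x.1 • (primOp E ∘L appOp E E (nem (fderiv ℝ V) hDV (Q x)))
    have hder : fderiv ℝ f (x, Q x) ∘L .inr ℝ (ℝ × E) (C(TI, E)) = 1 - A := by
      have h1 : HasFDerivAt (fun q : C(TI, E) => f (x, q))
          (fderiv ℝ f (x, Q x) ∘L .inr ℝ (ℝ × E) (C(TI, E))) (Q x) := by
        have := (cdf.differentiableAt (by simp)).hasFDerivAt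
        exact HasFDerivAt.comp (Q x) this (hasFDerivAt_prodMk_right x (Q x))
      have h2 : HasFDerivAt (fun q : C(TI, E) => f (x, q)) (1 - A) (Q x) := by
        have hn := nem_hasFDerivAt V hV hDV (Q x)
        have h3 := ((primOp E).hasFDerivAt.comp (Q x) hn).const_smul x.1
        have h4 := (hasFDerivAt_id (𝕜 := ℝ) (Q x)).sub
          ((hasFDerivAt_const (ContinuousMap.const TI x.2) (Q x)).add h3)
        refine h4.congr_fderiv ?_
        simp only [zero_add]
        rfl
      exact h1.unique h2
    have hA : ‖A‖ < 1 := by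
      have hb : ‖appOp E E (nem (fderiv ℝ V) hDV (Q x))‖ ≤ K := by
        refine ContinuousLinearMap.opNorm_le_bound _ K.2 fun q => ?_
        refine (ContinuousMap.norm_le _ (by positivity)).2 fun s => ?_
        rw [appOp_apply]
        refine ((nem (fderiv ℝ V) hDV (Q x) s).le_opNorm _).trans ?_
        gcongr
        · exact norm_fderiv_le_of_lipschitz ℝ hK
        · exact q.norm_coe_le_norm s
      have hb2 : ‖primOp E ∘L appOp E E (nem (fderiv ℝ V) hDV (Q x))‖ ≤ K := by
        refine (ContinuousLinearMap.opNorm_comp_le _ _).trans ?_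
        have := primOp_norm (E := E)
        calc _ ≤ 1 * (K : ℝ) := by gcongr
          _ = K := one_mul _
      have : ‖A‖ ≤ |x.1| * K := by
        exact opnorm_smul_le _ _ _ hb2
      refine this.trans_lt ?_
      rw [hε, lt_div_iff₀ (by positivity)] at hx
      nlinarith [abs_nonneg x.1]
    have hinv : (fderiv ℝ f (x, Q x) ∘L .inr ℝ (ℝ × E) (C(TI, E))).IsInvertible := by
      rw [hder]
      exact one_sub_invertible A hA
    have hev := cdf.eventually_apply_implicitFunction (by simp) hinv
    have hcd := cdf.contDiffAt_implicitFunction (by simp) hinv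
    refine hcd.congr_of_eventuallyEq ?_
    filter_upwards [hev, hopen.mem_nhds hx] with y hy hyε
    symm
    apply huniq y hyε
    have h0 : f (x, Q x) = 0 := by
      show Q x - picOp V hK.continuous x.1 x.2 (Q x) = 0
      rw [hQ x hx, sub_self]
    rw [h0] at hy
    exact (sub_eq_zero.1 hy).symm
  refine ⟨ε, hε0, fun x => Q x one, ?_, ?_, ?_⟩
  · intro x hx
    have h1 : ContDiffAt ℝ ∞ Q x := hQs x hx
    have h2 : ContDiff ℝ ∞ (fun q : C(TI, E) => q one) :=
      (ContinuousMap.evalCLM ℝ one : C(TI, E) →L[ℝ] E).contDiff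
    exact (h2.contDiffAt.comp x h1).contDiffWithinAt
  · intro z
    have := hQ (0, z) (by simpa using hε0)
    have h2 := congrArg (fun q : C(TI, E) => q one) this
    simp only [picOp_apply, zero_smul, add_zero] at h2
    exact h2.symm
  · intro t z ht
    obtain ⟨t1, h1, h2⟩ := exists_between ht
    have ht1 : 0 < t1 := (abs_nonneg t).trans_lt h1
    have ht1' : |(t1, z).1| < ε := by simpa [abs_of_pos ht1] using h2
    have hfix := hQ (t1, z) ht1'
    have hform : ∀ s : ℝ, |s| < t1 → Q (s, z) one = extc (Q (t1, z)) (s / t1) ∧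
        Q (s, z) one = z + t1 • ∫ τ in (0 : ℝ)..(s / t1), V (extc (Q (t1, z)) τ) := by
      intro s hs
      have hmem : s / t1 ∈ Icc (-1 : ℝ) 1 := by
        rw [mem_Icc, ← abs_le, abs_div, abs_of_pos ht1]
        exact (div_le_one ht1).2 hs.le
      obtain ⟨r, hr, hr1⟩ := picOp_rescale V hK.continuous t1 z (Q (t1, z)) hfix ⟨_, hmem⟩
      have hst : t1 * (s / t1) = s := by field_simp
      simp only [hst] at hr
      have hrQ := huniq (s, z) (by simpa using hs.trans h2) r hr
      rw [← hrQ, extc_of_mem _ hmem]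
      refine ⟨hr1, ?_⟩
      rw [hr1]
      conv_lhs => rw [← hfix, picOp_apply]
    have hcont : Continuous (fun τ => V (extc (Q (t1, z)) τ)) :=
      hK.continuous.comp (extc_cont _)
    have hd0 : HasDerivAt (fun u : ℝ => ∫ τ in (0 : ℝ)..u, V (extc (Q (t1, z)) τ))
        (V (extc (Q (t1, z)) (t / t1))) (t / t1) :=
      intervalIntegral.integral_hasDerivAt_right (hcont.intervalIntegrable _ _)
        (hcont.stronglyMeasurableAtFilter _ _) hcont.continuousAt
    have hd1 : HasDerivAt (fun s : ℝ => z + t1 • ∫ τ in (0 : ℝ)..(s / t1), V (extc (Q (t1, z)) τ))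
        (t1 • ((1 / t1) • V (extc (Q (t1, z)) (t / t1)))) t := by
      have := HasDerivAt.scomp t hd0 ((hasDerivAt_id t).div_const t1)
      exact (this.const_smul t1).const_add z
    rw [smul_smul, mul_one_div_cancel ht1.ne', one_smul, ← (hform t h1).1] at hd1
    refine hd1.congr_of_eventuallyEq ?_
    have : ∀ᶠ s in 𝓝 t, |s| < t1 := (continuous_abs.tendsto t).eventually_lt_const h1
    filter_upwards [this] with s hs
    exact (hform s hs).2

/-- Uniqueness of integral curves from time `0` to time `t`. -/
theorem curve_unique (V : E → E) (K : ℝ≥0) (hK : LipschitzWith K V) (c d : ℝ → E) (t : ℝ)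
    (h0 : c 0 = d 0) (hc : ∀ s ∈ uIcc 0 t, HasDerivAt c (V (c s)) s)
    (hd : ∀ s ∈ uIcc 0 t, HasDerivAt d (V (d s)) s) : c t = d t := by
  rcases le_total 0 t with h | h
  · rw [uIcc_of_le h] at hc hd
    exact ODE_solution_unique_of_mem_Icc_right (v := fun _ => V) (s := fun _ => univ) (K := K)
      (fun _ _ => hK.lipschitzOnWith)
      (fun s hs => (hc s hs).continuousAt.continuousWithinAt)
      (fun s hs => (hc s (Ico_subset_Icc_self hs)).hasDerivWithinAt) (fun _ _ => mem_univ _)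
      (fun s hs => (hd s hs).continuousAt.continuousWithinAt)
      (fun s hs => (hd s (Ico_subset_Icc_self hs)).hasDerivWithinAt) (fun _ _ => mem_univ _)
      h0 (right_mem_Icc.2 h)
  · rw [uIcc_of_ge h] at hc hd
    exact ODE_solution_unique_of_mem_Icc_left (v := fun _ => V) (s := fun _ => univ) (K := K)
      (fun _ _ => hK.lipschitzOnWith)
      (fun s hs => (hc s hs).continuousAt.continuousWithinAt)
      (fun s hs => (hc s (Ioc_subset_Icc_self hs)).hasDerivWithinAt) (fun _ _ => mem_univ _)
      (fun s hs => (hd s hs).continuousAt.continuousWithinAt)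
      (fun s hs => (hd s (Ioc_subset_Icc_self hs)).hasDerivWithinAt) (fun _ _ => mem_univ _)
      h0 (left_mem_Icc.2 h)

end FlowPart2

section TransportPart
set_option linter.unusedSectionVars false
open Set Filter Topology
open scoped NNReal

variable {E : Type} [NormedAddCommGroup E] [NormedSpace ℝ E] [CompleteSpace E]

lemma hasDerivAt_fst' {A B : Type} [NormedAddCommGroup A] [NormedSpace ℝ A]
    [NormedAddCommGroup B] [NormedSpace ℝ B] {c : ℝ → A × B} {v : A × B} {t : ℝ}
    (h : HasDerivAt c v t) : HasDerivAt (fun s => (c s).1) v.1 t :=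
  (ContinuousLinearMap.fst ℝ A B).hasFDerivAt.comp_hasDerivAt t h

lemma hasDerivAt_snd' {A B : Type} [NormedAddCommGroup A] [NormedSpace ℝ A]
    [NormedAddCommGroup B] [NormedSpace ℝ B] {c : ℝ → A × B} {v : A × B} {t : ℝ}
    (h : HasDerivAt c v t) : HasDerivAt (fun s => (c s).2) v.2 t :=
  (ContinuousLinearMap.snd ℝ A B).hasFDerivAt.comp_hasDerivAt t h

lemma abs_lt_of_uIcc {s t ε : ℝ} (ht : |t| < ε) (hs : s ∈ uIcc 0 t) : |s| < ε := by
  rcases le_total 0 t with h | h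
  · rw [uIcc_of_le h] at hs
    rw [abs_lt] at ht ⊢; constructor <;> linarith [hs.1, hs.2]
  · rw [uIcc_of_ge h] at hs
    rw [abs_lt] at ht ⊢; constructor <;> linarith [hs.1, hs.2]

lemma abs_sub_lt_of_uIcc {s t ε : ℝ} (ht : |t| < ε) (hs : s ∈ uIcc 0 t) : |s - t| < ε := by
  rcases le_total 0 t with h | h
  · rw [uIcc_of_le h] at hs
    rw [abs_lt] at ht ⊢; constructor <;> linarith [hs.1, hs.2]
  · rw [uIcc_of_ge h] at hs
    rw [abs_lt] at ht ⊢; constructor <;> linarith [hs.1, hs.2]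

theorem transport (B : ℝ × E → E) (c g : ℝ × E → ℝ)
    (hB : ContDiff ℝ ∞ B) (hc : ContDiff ℝ ∞ c) (hg : ContDiff ℝ ∞ g)
    (hBs : HasCompactSupport B) (hcs : HasCompactSupport c) (hgs : HasCompactSupport g) :
    ∃ ε > 0, ∃ h : ℝ × E → ℝ, ContDiffOn ℝ ∞ h {x | |x.1| < ε} ∧
      (∀ᶠ z in 𝓝 (0 : ℝ × E), fderiv ℝ h z (1, B z) = c z * h z + g z) ∧
      ∀ t p, |t| < ε → ∃ γ : ℝ → E, γ t = p ∧
        (∀ s ∈ uIcc 0 t, HasDerivAt γ (B (s, γ s)) s) ∧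
        ((∀ s ∈ uIcc 0 t, g (s, γ s) = 0) → h (t, p) = 0) := by
  let θ : ContDiffBump (0 : ℝ) := ⟨1, 2, by norm_num, by norm_num⟩
  let V1 : ℝ × E → ℝ × E := fun q => (1, B q)
  let G : (ℝ × E) × ℝ → ℝ := fun x => θ x.2 * (c x.1 * x.2 + g x.1)
  let V : (ℝ × E) × ℝ → (ℝ × E) × ℝ := fun x => (V1 x.1, G x)
  have hGs : ContDiff ℝ ∞ G := by
    have : ContDiff ℝ ∞ (θ : ℝ → ℝ) := θ.contDiff
    fun_prop
  have hGc : HasCompactSupport G := by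
    refine HasCompactSupport.intro ((hcs.isCompact.union hgs.isCompact).prod
      θ.hasCompactSupport.isCompact) ?_
    intro x hx
    by_cases h1 : x.2 ∈ tsupport θ
    · have h2 : x.1 ∉ tsupport c ∪ tsupport g := fun h => hx ⟨h, h1⟩
      simp only [mem_union, not_or] at h2
      simp [G, image_eq_zero_of_notMem_tsupport h2.1, image_eq_zero_of_notMem_tsupport h2.2]
    · simp [G, image_eq_zero_of_notMem_tsupport h1]
  obtain ⟨KB, hKB⟩ := ContDiff.lipschitzWith_of_hasCompactSupport hBs hB (by simp)
  obtain ⟨KG, hKG⟩ := ContDiff.lipschitzWith_of_hasCompactSupport hGc hGs (by simp)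
  have hV1L : LipschitzWith (max 0 KB) V1 := (LipschitzWith.const (1 : ℝ)).prodMk hKB
  have hVL : LipschitzWith (max (max 0 KB * 1) KG) V :=
    (hV1L.comp LipschitzWith.prod_fst).prodMk hKG
  have hVs : ContDiff ℝ ∞ V := by fun_prop
  obtain ⟨ε, hε, φ, hφs, hφ0, hφd⟩ := exists_flow V hVs _ hVL
  -- the projection to the base
  have hpd : ∀ t z, |t| < ε →
      HasDerivAt (fun s => (φ (s, z)).1) (V1 (φ (t, z)).1) t := fun t z ht =>
    hasDerivAt_fst' (hφd t z ht)
  have htime : ∀ t z, |t| < ε → (φ (t, z)).1.1 = z.1.1 + t := by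
    intro t z ht
    refine curve_unique (fun _ : ℝ => (1 : ℝ)) 0 (LipschitzWith.const _)
      (fun s => (φ (s, z)).1.1) (fun s => z.1.1 + s) t (by simp [hφ0]) ?_ ?_
    · intro s hs
      exact hasDerivAt_fst' (hpd s z (abs_lt_of_uIcc ht hs))
    · intro s hs
      exact (hasDerivAt_id s).const_add _
  let P : ℝ × E → E := fun x => (φ (-x.1, (x, 0))).1.2
  let h : ℝ × E → ℝ := fun x => (φ (x.1, ((0, P x), 0))).2
  -- group law
  have hret : ∀ s p0, |s| < ε → P (φ (s, ((0, p0), 0))).1 = p0 := by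
    intro s p0 hs
    have h1 : (φ (s, ((0, p0), 0))).1.1 = s := by simp [htime s _ hs]
    have key := curve_unique V1 _ hV1L (fun r => (φ (r, ((φ (s, ((0, p0), 0))).1, 0))).1)
      (fun r => (φ (s + r, ((0, p0), 0))).1) (-s) (by simp [hφ0]) ?_ ?_
    · simp only [add_neg_cancel, hφ0] at key
      show (φ (-(φ (s, ((0, p0), 0))).1.1, ((φ (s, ((0, p0), 0))).1, 0))).1.2 = p0
      rw [h1, key]
    · intro r hr
      exact hpd r _ (abs_lt_of_uIcc (by simpa using hs) hr)
    · intro r hr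
      have h2 : |s + r| < ε := by
        have := abs_sub_lt_of_uIcc (t := -s) (by simpa using hs) hr
        rwa [sub_neg_eq_add, add_comm] at this
      have := (hpd (s + r) ((0, p0), 0) h2)
      exact HasDerivAt.comp_const_add s r this
  have hfwd : ∀ t p, |t| < ε → (φ (t, ((0, P (t, p)), 0))).1 = (t, p) := by
    intro t p ht
    have key := curve_unique V1 _ hV1L (fun r => (φ (r, ((0, P (t, p)), 0))).1)
      (fun r => (φ (r - t, ((t, p), 0))).1) t ?_ ?_ ?_
    · simpa [hφ0] using key
    · simp only [hφ0, zero_sub]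
      ext
      · rw [htime _ _ (by simpa using ht)]; simp
      · rfl
    · intro r hr
      exact hpd r _ (abs_lt_of_uIcc ht hr)
    · intro r hr
      have := hpd (r - t) ((t, p), 0) (abs_sub_lt_of_uIcc ht hr)
      exact HasDerivAt.comp_sub_const r t this
  have hopen : IsOpen {x : ℝ × E | |x.1| < ε} := isOpen_lt (by fun_prop) continuous_const
  have hPs : ContDiffOn ℝ ∞ P {x | |x.1| < ε} := by
    have h1 : ContDiffOn ℝ ∞ (fun x : ℝ × E => φ (-x.1, (x, 0))) {x | |x.1| < ε} := by
      refine hφs.comp (t := {x | |x.1| < ε}) (ContDiff.contDiffOn (by fun_prop)) ?_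
      intro x hx
      simpa using hx
    exact (contDiff_snd.comp contDiff_fst).comp_contDiffOn h1
  have hhs : ContDiffOn ℝ ∞ h {x | |x.1| < ε} := by
    have h1 : ContDiffOn ℝ ∞ (fun x : ℝ × E => φ (x.1, ((0, P x), 0))) {x | |x.1| < ε} := by
      refine hφs.comp (t := {x | |x.1| < ε}) (contDiffOn_fst.prodMk
        ((contDiffOn_const.prodMk hPs).prodMk contDiffOn_const)) ?_
      intro x hx
      simpa using hx
    exact contDiff_snd.comp_contDiffOn h1
  have hpde : ∀ z : ℝ × E, |z.1| < ε → fderiv ℝ h z (1, B z) = θ (h z) * (c z * h z + g z) := by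
    rintro ⟨t, p⟩ ht
    have hz := hfwd t p ht
    set p0 := P (t, p) with hp0
    have hd : DifferentiableAt ℝ h (φ (t, ((0, p0), 0))).1 := by
      rw [hz]
      exact (hhs.contDiffAt (hopen.mem_nhds ht)).differentiableAt (by simp)
    have h1 := hd.hasFDerivAt.comp_hasDerivAt t (hpd t ((0, p0), 0) ht)
    have h2 := hasDerivAt_snd' (hφd t ((0, p0), 0) ht)
    have h3 : (h ∘ fun s => (φ (s, ((0, p0), 0))).1) =ᶠ[𝓝 t] fun s => (φ (s, ((0, p0), 0))).2 := by
      have : ∀ᶠ s in 𝓝 t, |s| < ε := (continuous_abs.tendsto t).eventually_lt_const ht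
      filter_upwards [this] with s hs
      show (φ ((φ (s, ((0, p0), 0))).1.1, ((0, P (φ (s, ((0, p0), 0))).1), 0))).2 = _
      rw [hret s p0 hs, htime s _ hs]
      simp
    have h4 := (h1.congr_of_eventuallyEq h3.symm).unique h2
    rw [hz] at h4
    have h5 : (φ (t, ((0, p0), 0))) = ((t, p), h (t, p)) := by
      rw [← hz]
      ext
      · rfl
      · rfl
      · show (φ (t, ((0, p0), 0))).2 = h (φ (t, ((0, p0), 0))).1
        rw [hz]
    rw [h5] at h4
    exact h4
  refine ⟨ε, hε, h, hhs, ?_, ?_⟩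
  · have h0 : h 0 = 0 := by
      show (φ (0, _)).2 = 0
      rw [hφ0]
    have hmem : {x : ℝ × E | |x.1| < ε} ∈ 𝓝 (0 : ℝ × E) := hopen.mem_nhds (by simpa using hε)
    have hcont : ContinuousAt h 0 := (hhs.contDiffAt hmem).continuousAt
    have hsmall : ∀ᶠ z in 𝓝 (0 : ℝ × E), |h z| < 1 := by
      have := (continuous_abs.continuousAt.comp hcont).eventually_lt_const
        (u := 1) (by simp [h0])
      exact this
    filter_upwards [hmem, hsmall] with z hz hz1
    rw [hpde z hz, θ.one_of_mem_closedBall, one_mul]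
    simpa using hz1.le
  · intro t p ht
    refine ⟨fun s => (φ (s, ((0, P (t, p)), 0))).1.2, by simp [hfwd t p ht], ?_, ?_⟩
    · intro s hs
      have hs' := abs_lt_of_uIcc ht hs
      have h1 := hasDerivAt_snd' (hpd s ((0, P (t, p)), 0) hs')
      have h2 : (φ (s, ((0, P (t, p)), 0))).1 = (s, (φ (s, ((0, P (t, p)), 0))).1.2) := by
        ext
        · simp [htime s _ hs']
        · rfl
      convert h1 using 1
      show _ = B (φ (s, ((0, P (t, p)), 0))).1
      rw [← h2]
    · intro hg0
      have key := curve_unique V _ hVL (fun s => φ (s, ((0, P (t, p)), 0)))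
        (fun s => ((φ (s, ((0, P (t, p)), 0))).1, 0)) t (by simp [hφ0]) ?_ ?_
      · exact congrArg Prod.snd key
      · intro s hs
        exact hφd s _ (abs_lt_of_uIcc ht hs)
      · intro s hs
        have hs' := abs_lt_of_uIcc ht hs
        have h2 : (φ (s, ((0, P (t, p)), 0))).1 = (s, (φ (s, ((0, P (t, p)), 0))).1.2) := by
          ext
          · simp [htime s _ hs']
          · rfl
        have h3 := (hpd s ((0, P (t, p)), 0) hs').prodMk (hasDerivAt_const s (0 : ℝ))
        have h4 := hg0 s hs
        rw [← h2] at h4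
        have h5 : V ((φ (s, ((0, P (t, p)), 0))).1, 0) = (V1 (φ (s, ((0, P (t, p)), 0))).1, 0) := by
          simp [V, G, h4]
        rw [h5]
        exact h3

end TransportPart

section FlatPart
set_option linter.unusedSectionVars false
open Set Filter Topology

variable {A : Type} [NormedAddCommGroup A] [NormedSpace ℝ A]
variable {A' : Type} [NormedAddCommGroup A'] [NormedSpace ℝ A']
variable {G : Type} [NormedAddCommGroup G] [NormedSpace ℝ G]
variable {G' : Type} [NormedAddCommGroup G'] [NormedSpace ℝ G']
variable {F : Type} [NormedAddCommGroup F] [NormedSpace ℝ F]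

/-- smooth, compactly supported and flat along `S`. -/
def FlatC (S : Set A) (k : A → G) : Prop :=
  ContDiff ℝ ∞ k ∧ HasCompactSupport k ∧ ∀ z ∈ S, ∀ j : ℕ, iteratedFDeriv ℝ j k z = 0

lemma FlatC.smooth {S : Set A} {k : A → G} (h : FlatC S k) : ContDiff ℝ ∞ k := h.1
lemma FlatC.cpt {S : Set A} {k : A → G} (h : FlatC S k) : HasCompactSupport k := h.2.1

lemma FlatC.apply_zero {S : Set A} {k : A → G} (h : FlatC S k) {z : A} (hz : z ∈ S) :
    k z = 0 := by
  have := h.2.2 z hz 0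
  rw [← norm_eq_zero, norm_iteratedFDeriv_zero, norm_eq_zero] at this
  exact this

lemma FlatC.fderiv' {S : Set A} {k : A → G} (h : FlatC S k) : FlatC S (fderiv ℝ k) := by
  refine ⟨h.1.fderiv_right (by simp), h.2.1.fderiv (𝕜 := ℝ), fun z hz j => ?_⟩
  rw [← norm_eq_zero, norm_iteratedFDeriv_fderiv, h.2.2 z hz (j + 1), norm_zero]

lemma FlatC.add {S : Set A} {k l : A → G} (h : FlatC S k) (h' : FlatC S l) :
    FlatC S (fun z => k z + l z) := by
  refine ⟨h.1.add h'.1, h.2.1.add h'.2.1, fun z hz j => ?_⟩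
  have := iteratedFDeriv_add_apply (𝕜 := ℝ) (i := j) (x := z) (f := k) (g := l)
    ((h.1.of_le (by exact_mod_cast le_top)).contDiffAt) ((h'.1.of_le (by exact_mod_cast le_top)).contDiffAt)
  show iteratedFDeriv ℝ j (k + l) z = 0
  rw [this, h.2.2 z hz, h'.2.2 z hz, add_zero]

lemma FlatC.clm {S : Set A} {k : A → G} (h : FlatC S k) {T : A → G →L[ℝ] G'}
    (hT : ContDiff ℝ ∞ T) : FlatC S (fun z => T z (k z)) := by
  refine ⟨hT.clm_apply h.1, ?_, fun z hz j => ?_⟩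
  · refine HasCompactSupport.intro h.2.1.isCompact fun z hz => ?_
    rw [image_eq_zero_of_notMem_tsupport hz, map_zero]
  · have := norm_iteratedFDeriv_clm_apply (n := j) hT h.1 z (by exact_mod_cast le_top)
    rw [← norm_le_zero_iff]
    refine this.trans (le_of_eq (Finset.sum_eq_zero fun i _ => ?_))
    rw [h.2.2 z hz, norm_zero, mul_zero]

lemma FlatC.smul {S : Set A} {k : A → G} (h : FlatC S k) {T : A → ℝ}
    (hT : ContDiff ℝ ∞ T) : FlatC S (fun z => T z • k z) := by
  have := h.clm (T := fun z => T z • ContinuousLinearMap.id ℝ G) (hT.smul contDiff_const)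
  exact this

/-- flat composed with smooth, times a cut-off. -/
lemma flat_comp {k : A → G} {π : A' → A} (hk : ContDiff ℝ ∞ k) (hπ : ContDiff ℝ ∞ π) {z : A'}
    (hz : ∀ j : ℕ, iteratedFDeriv ℝ j k (π z) = 0) (j : ℕ) :
    iteratedFDeriv ℝ j (fun z => k (π z)) z = 0 := by
  have hfin : ∃ D : ℝ, 1 ≤ D ∧ ∀ i ≤ j, ‖iteratedFDeriv ℝ i π z‖ ≤ D := by
    refine ⟨1 + ∑ i ∈ Finset.range (j + 1), ‖iteratedFDeriv ℝ i π z‖, ?_, ?_⟩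
    · have : 0 ≤ ∑ i ∈ Finset.range (j + 1), ‖iteratedFDeriv ℝ i π z‖ :=
        Finset.sum_nonneg fun _ _ => norm_nonneg _
      linarith
    · intro i hi
      have := Finset.single_le_sum (f := fun i => ‖iteratedFDeriv ℝ i π z‖)
        (s := Finset.range (j + 1)) (fun _ _ => norm_nonneg _) (Finset.mem_range.2 (by omega) : i ∈ _)
      linarith
  obtain ⟨D, hD1, hD⟩ := hfin
  have := norm_iteratedFDeriv_comp_le (n := j) (C := 0) (D := D) hk hπ (by exact_mod_cast le_top) z
    (fun i _ => by rw [hz i, norm_zero])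
    (fun i hi1 hi => (hD i hi).trans (by
      calc D = D ^ 1 := (pow_one D).symm
        _ ≤ D ^ i := pow_le_pow_right₀ hD1 hi1))
  rw [← norm_le_zero_iff]
  refine this.trans (by simp)

/-- The plane `x = 0`. -/
def X0 (F : Type) [NormedAddCommGroup F] : Set (ℝ × ℝ × F) := {z | z.1 = 0}

lemma FlatC.decay (n : ℕ) : ∀ {G : Type} [NormedAddCommGroup G] [NormedSpace ℝ G]
    {k : ℝ × ℝ × F → G}, FlatC (X0 F) k → ∃ C, 0 ≤ C ∧ ∀ z, ‖k z‖ ≤ C * |z.1| ^ n := by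
  induction n with
  | zero =>
    intro G _ _ k hk
    obtain ⟨C, hC⟩ := hk.smooth.continuous.bounded_above_of_compact_support hk.cpt
    refine ⟨C, (norm_nonneg _).trans (hC 0), fun z => by simpa using hC z⟩
  | succ n ih =>
    intro G _ _ k hk
    obtain ⟨C, hC0, hC⟩ := ih hk.fderiv'
    refine ⟨C, hC0, fun z => ?_⟩
    have hconv : Convex ℝ {y : ℝ × ℝ × F | y.1 ∈ Icc (-|z.1|) |z.1|} := by
      have := (convex_Icc (-|z.1|) |z.1|).linear_preimage (LinearMap.fst ℝ ℝ (ℝ × F))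
      exact this
    have := hconv.norm_image_sub_le_of_norm_fderiv_le (f := k) (𝕜 := ℝ) (C := C * |z.1| ^ n)
      (fun y _ => hk.smooth.differentiable (by simp) y) (fun y hy => (hC y).trans (by
        have : |y.1| ≤ |z.1| := abs_le.2 hy
        gcongr)) (x := (0, z.2)) (y := z) (by simp) (by simp [neg_abs_le, le_abs_self])
    rw [hk.apply_zero (show ((0, z.2) : ℝ × ℝ × F) ∈ X0 F from rfl), sub_zero] at this
    refine this.trans (le_of_eq ?_)
    have h2 : z - (0, z.2) = (z.1, 0) := by ext <;> simp
    rw [h2, Prod.norm_mk, norm_zero, max_eq_left (norm_nonneg _), Real.norm_eq_abs]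
    ring

/-- The substitution operator. -/
noncomputable def HH (i j : ℕ) (k : ℝ × ℝ × F → G) (z : ℝ × ℝ × F) : G :=
  open Classical in if 0 < z.1 then (z.1 ^ j)⁻¹ • k (z.1, z.2.1 / z.1 ^ i, z.2.2) else 0

lemma HH_pos (i j : ℕ) (k : ℝ × ℝ × F → G) {z : ℝ × ℝ × F} (hz : 0 < z.1) :
    HH i j k z = (z.1 ^ j)⁻¹ • k (z.1, z.2.1 / z.1 ^ i, z.2.2) := if_pos hz

lemma HH_neg (i j : ℕ) (k : ℝ × ℝ × F → G) {z : ℝ × ℝ × F} (hz : z.1 ≤ 0) :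
    HH i j k z = 0 := if_neg (not_lt.2 hz)

lemma HH_decay (i j n : ℕ) {k : ℝ × ℝ × F → G} (hk : FlatC (X0 F) k) :
    ∃ C, 0 ≤ C ∧ ∀ z, ‖HH i j k z‖ ≤ C * |z.1| ^ n := by
  obtain ⟨C, hC0, hC⟩ := hk.decay (n + j)
  refine ⟨C, hC0, fun z => ?_⟩
  rcases lt_or_ge 0 z.1 with h | h
  · rw [HH_pos i j k h, norm_smul, norm_inv, norm_pow, Real.norm_eq_abs]
    have := hC (z.1, z.2.1 / z.1 ^ i, z.2.2)
    have h2 : 0 < |z.1| := abs_pos.2 h.ne'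
    rw [inv_mul_le_iff₀ (by positivity)]
    refine this.trans (le_of_eq ?_)
    simp only
    ring
  · rw [HH_neg i j k h, norm_zero]
    positivity

lemma HH_cpt (i j : ℕ) {k : ℝ × ℝ × F → G} (hk : HasCompactSupport k) :
    HasCompactSupport (HH i j k) := by
  have hc : Continuous (fun z : ℝ × ℝ × F => (z.1, z.1 ^ i * z.2.1, z.2.2)) := by fun_prop
  refine HasCompactSupport.intro (hk.isCompact.image hc) fun z hz => ?_
  rcases lt_or_ge 0 z.1 with h | h
  · rw [HH_pos i j k h]
    rw [image_eq_zero_of_notMem_tsupport (f := k), smul_zero]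
    intro hm
    refine hz ⟨_, hm, ?_⟩
    ext
    · rfl
    · simp only; field_simp
    · rfl
  · exact HH_neg i j k h

noncomputable def dX (F : Type) [NormedAddCommGroup F] [NormedSpace ℝ F] : ℝ × ℝ × F →L[ℝ] ℝ :=
  ContinuousLinearMap.fst ℝ ℝ (ℝ × F)
noncomputable def dU (F : Type) [NormedAddCommGroup F] [NormedSpace ℝ F] : ℝ × ℝ × F →L[ℝ] ℝ :=
  (ContinuousLinearMap.fst ℝ ℝ F).comp (ContinuousLinearMap.snd ℝ ℝ (ℝ × F))
noncomputable def dW (F : Type) [NormedAddCommGroup F] [NormedSpace ℝ F] : ℝ × ℝ × F →L[ℝ] F :=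
  (ContinuousLinearMap.snd ℝ ℝ F).comp (ContinuousLinearMap.snd ℝ ℝ (ℝ × F))

noncomputable def kk1 (i j : ℕ) (k : ℝ × ℝ × F → G) (z : ℝ × ℝ × F) : ℝ × ℝ × F →L[ℝ] G :=
  (-(j : ℝ)) • (dX F).smulRight (k z)
    + (-(i * z.2.1)) • (dX F).smulRight (fderiv ℝ k z (0, 1, 0))
noncomputable def kk2 (k : ℝ × ℝ × F → G) (z : ℝ × ℝ × F) : ℝ × ℝ × F →L[ℝ] G :=
  (fderiv ℝ k z).comp ((dX F).prod ((0 : ℝ × ℝ × F →L[ℝ] ℝ).prod (dW F)))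
noncomputable def kk3 (k : ℝ × ℝ × F → G) (z : ℝ × ℝ × F) : ℝ × ℝ × F →L[ℝ] G :=
  (dU F).smulRight (fderiv ℝ k z (0, 1, 0))

lemma kk1_flat (i j : ℕ) {k : ℝ × ℝ × F → G} (hk : FlatC (X0 F) k) :
    FlatC (X0 F) (kk1 i j k) := by
  refine FlatC.add ?_ ?_
  · refine FlatC.smul ?_ contDiff_const
    exact hk.clm (T := fun _ => ContinuousLinearMap.smulRightL ℝ _ G (dX F)) contDiff_const
  · refine FlatC.smul ?_ (by fun_prop)
    exact hk.fderiv'.clm (T := fun _ => (ContinuousLinearMap.smulRightL ℝ _ G (dX F)).comp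
      (ContinuousLinearMap.apply ℝ G (0, 1, 0))) contDiff_const

lemma kk2_flat {k : ℝ × ℝ × F → G} (hk : FlatC (X0 F) k) : FlatC (X0 F) (kk2 k) :=
  hk.fderiv'.clm (T := fun _ => (ContinuousLinearMap.compL ℝ (ℝ × ℝ × F) (ℝ × ℝ × F) G).flip
    ((dX F).prod ((0 : ℝ × ℝ × F →L[ℝ] ℝ).prod (dW F)))) contDiff_const

lemma kk3_flat {k : ℝ × ℝ × F → G} (hk : FlatC (X0 F) k) : FlatC (X0 F) (kk3 k) :=
  hk.fderiv'.clm (T := fun _ => (ContinuousLinearMap.smulRightL ℝ _ G (dU F)).comp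
      (ContinuousLinearMap.apply ℝ G (0, 1, 0))) contDiff_const

lemma HH_hasFDerivAt (i j : ℕ) {k : ℝ × ℝ × F → G} (hk : FlatC (X0 F) k) (z : ℝ × ℝ × F) :
    HasFDerivAt (HH i j k) (HH i (j + 1) (kk1 i j k) z + HH i j (kk2 k) z
      + HH i (j + i) (kk3 k) z) z := by
  rcases lt_trichotomy z.1 0 with h | h | h
  · rw [HH_neg _ _ _ h.le, HH_neg _ _ _ h.le, HH_neg _ _ _ h.le]
    simp only [add_zero]
    refine (hasFDerivAt_const (0 : G) z).congr_of_eventuallyEq ?_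
    have : ∀ᶠ y : ℝ × ℝ × F in 𝓝 z, y.1 < 0 :=
      (continuous_fst.tendsto z).eventually_lt_const h
    filter_upwards [this] with y hy
    exact HH_neg _ _ _ hy.le
  · rw [HH_neg _ _ _ h.le, HH_neg _ _ _ h.le, HH_neg _ _ _ h.le]
    simp only [add_zero]
    obtain ⟨C, hC0, hC⟩ := HH_decay i j 2 hk
    refine HasFDerivAt.of_isLittleO ?_
    rw [HH_neg _ _ _ h.le]
    simp only [sub_zero, zero_apply]
    have h1 : (HH i j k) =O[𝓝 z] fun y => ‖y - z‖ ^ 2 := by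
      refine Asymptotics.IsBigO.of_bound C (Eventually.of_forall fun y => (hC y).trans ?_)
      have : |y.1| ≤ ‖y - z‖ := by
        have := norm_fst_le (y - z)
        rwa [Prod.fst_sub, h, sub_zero] at this
      rw [norm_pow, norm_norm]
      gcongr
    refine h1.trans_isLittleO ?_
    have := (Asymptotics.isLittleO_norm_pow_id (E' := ℝ × ℝ × F) (n := 2) (by norm_num)).comp_tendsto
      (show Tendsto (fun y => y - z) (𝓝 z) (𝓝 0) by
        have : ContinuousAt (fun y => y - z) z := by fun_prop
        simpa [ContinuousAt] using this)
    exact this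
  · rw [HH_pos _ _ _ h, HH_pos _ _ _ h, HH_pos _ _ _ h]
    have hev : HH i j k =ᶠ[𝓝 z] fun y => (y.1 ^ j)⁻¹ • k (y.1, y.2.1 / y.1 ^ i, y.2.2) := by
      have : ∀ᶠ y : ℝ × ℝ × F in 𝓝 z, 0 < y.1 :=
        (continuous_fst.tendsto z).eventually_const_lt h
      filter_upwards [this] with y hy
      exact HH_pos _ _ _ hy
    have hx : HasFDerivAt (fun y : ℝ × ℝ × F => y.1) (dX F) z := (dX F).hasFDerivAt
    have hu : HasFDerivAt (fun y : ℝ × ℝ × F => y.2.1) (dU F) z := (dU F).hasFDerivAt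
    have hw : HasFDerivAt (fun y : ℝ × ℝ × F => y.2.2) (dW F) z := (dW F).hasFDerivAt
    have hinv : ∀ n : ℕ, HasFDerivAt (fun y : ℝ × ℝ × F => (y.1 ^ n)⁻¹)
        ((-(n : ℝ) * (z.1 ^ (n + 1))⁻¹) • dX F) z := by
      intro n
      have h1 := (hasDerivAt_pow n z.1).inv (pow_ne_zero _ h.ne')
      have h2 := h1.comp_hasFDerivAt z hx
      refine h2.congr_fderiv ?_
      congr 1
      rcases n with _ | n
      · simp
      · simp only [Nat.add_sub_cancel]
        field_simp
        ring
    have hdiv : HasFDerivAt (fun y : ℝ × ℝ × F => y.2.1 / y.1 ^ i)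
        (z.2.1 • ((-(i : ℝ) * (z.1 ^ (i + 1))⁻¹) • dX F) + (z.1 ^ i)⁻¹ • dU F) z := by
      simp only [div_eq_mul_inv]
      exact hu.mul (hinv i)
    have hcomp : HasFDerivAt (fun y : ℝ × ℝ × F => k (y.1, y.2.1 / y.1 ^ i, y.2.2)) _ z :=
      HasFDerivAt.comp z (hk.smooth.differentiable (by simp) _).hasFDerivAt
        (hx.prodMk (hdiv.prodMk hw))
    refine (((hinv j).smul hcomp).congr_of_eventuallyEq hev).congr_fderiv ?_
    refine ContinuousLinearMap.ext fun v => ?_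
    obtain ⟨a, b, c⟩ := v
    set L := fderiv ℝ k (z.1, z.2.1 / z.1 ^ i, z.2.2) with hL
    have hlin : ∀ r : ℝ, L (a, r, c) = L (a, 0, c) + r • L (0, 1, 0) := by
      intro r
      rw [← map_smul, ← map_add]
      congr 1
      ext <;> simp
    simp only [kk1, kk2, kk3, dX, dU, dW, ← hL, add_apply, smul_apply,
      ContinuousLinearMap.smulRight_apply, ContinuousLinearMap.comp_apply,
      ContinuousLinearMap.prod_apply, ContinuousLinearMap.coe_fst', ContinuousLinearMap.coe_snd',
      zero_apply]
    rw [hlin]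
    have hx0 : z.1 ≠ 0 := h.ne'
    simp only [smul_eq_mul]
    match_scalars <;> field_simp
    all_goals ring


lemma HH_smooth_nat (i n : ℕ) : ∀ {G : Type} [NormedAddCommGroup G] [NormedSpace ℝ G] (j : ℕ)
    {k : ℝ × ℝ × F → G}, FlatC (X0 F) k → ContDiff ℝ n (HH i j k) := by
  induction n with
  | zero =>
    intro G _ _ j k hk
    rw [Nat.cast_zero, contDiff_zero, continuous_iff_continuousAt]
    exact fun z => (HH_hasFDerivAt i j hk z).continuousAt
  | succ n ih =>
    intro G _ _ j k hk
    push_cast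
    rw [contDiff_succ_iff_hasFDerivAt]
    exact ⟨_, ((ih _ (kk1_flat i j hk)).add (ih _ (kk2_flat hk))).add (ih _ (kk3_flat hk)),
      HH_hasFDerivAt i j hk⟩

lemma HH_smooth (i j : ℕ) {k : ℝ × ℝ × F → G} (hk : FlatC (X0 F) k) :
    ContDiff ℝ ∞ (HH i j k) :=
  contDiff_infty.2 fun n => HH_smooth_nat i n j hk

end FlatPart

section ConePart
set_option linter.unusedSectionVars false
open Set Filter Topology

variable {A : Type} [NormedAddCommGroup A] [NormedSpace ℝ A]
variable {G : Type} [NormedAddCommGroup G] [NormedSpace ℝ G]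
variable {F : Type} [NormedAddCommGroup F] [NormedSpace ℝ F]

lemma flat_smul {k : A → G} {T : A → ℝ} (hk : ContDiff ℝ ∞ k) (hT : ContDiff ℝ ∞ T) {z : A}
    (hz : ∀ j : ℕ, iteratedFDeriv ℝ j k z = 0) (j : ℕ) :
    iteratedFDeriv ℝ j (fun z => T z • k z) z = 0 := by
  have := norm_iteratedFDeriv_smul_le (n := j) hT hk z (by exact_mod_cast le_top)
  rw [← norm_le_zero_iff]
  refine this.trans (le_of_eq (Finset.sum_eq_zero fun i _ => ?_))
  rw [hz, norm_zero, mul_zero]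

lemma flat_of_zero {k : A → G} (hk : ContDiff ℝ ∞ k) {O : Set A} (hO : IsOpen O)
    (h0 : ∀ z ∈ O, k z = 0) (j : ℕ) {z : A} (hz : z ∈ closure O) :
    iteratedFDeriv ℝ j k z = 0 := by
  have hc : IsClosed {z | iteratedFDeriv ℝ j k z = 0} :=
    isClosed_eq (hk.continuous_iteratedFDeriv (by exact_mod_cast le_top)) continuous_const
  refine closure_minimal (fun y hy => ?_) hc hz
  have h1 : k =ᶠ[𝓝 y] fun _ => 0 := by
    filter_upwards [hO.mem_nhds hy] with w hw using h0 w hw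
  have h2 := h1.iteratedFDeriv ℝ j
  have h3 := h2.eq_of_nhds
  show iteratedFDeriv ℝ j k y = 0
  rw [h3]
  exact congrFun (iteratedFDeriv_fun_zero) y

/-- The plane `x = y = 0`. -/
def X00 (F : Type) [NormedAddCommGroup F] : Set (ℝ × ℝ × F) := {z | z.1 = 0 ∧ z.2.1 = 0}

/-- blow-up of a function, with a cut-off. -/
def bl (φ : ℝ → ℝ) (k : ℝ × ℝ × F → G) (z : ℝ × ℝ × F) : G :=
  φ z.2.1 • k (z.1, z.2.1 * z.1, z.2.2)

lemma bl_flat {φ : ℝ → ℝ} (hφ : ContDiff ℝ ∞ φ) (hφc : HasCompactSupport φ)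
    {k : ℝ × ℝ × F → G} (hk : FlatC (X00 F) k) : FlatC (X0 F) (bl φ k) := by
  have hπ : ContDiff ℝ ∞ (fun z : ℝ × ℝ × F => (z.1, z.2.1 * z.1, z.2.2)) := by fun_prop
  have hs : ContDiff ℝ ∞ (fun z : ℝ × ℝ × F => k (z.1, z.2.1 * z.1, z.2.2)) := hk.smooth.comp hπ
  have hφ' : ContDiff ℝ ∞ (fun z : ℝ × ℝ × F => φ z.2.1) := by fun_prop
  refine ⟨hφ'.smul hs, ?_, ?_⟩
  · have hK := hk.cpt.isCompact
    refine HasCompactSupport.intro ((hK.image continuous_fst).prod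
      (hφc.isCompact.prod (hK.image (continuous_snd.comp continuous_snd)))) fun z hz => ?_
    by_cases h1 : z.2.1 ∈ tsupport φ
    · have h2 : (z.1, z.2.1 * z.1, z.2.2) ∉ tsupport k := fun h =>
        hz ⟨⟨_, h, rfl⟩, h1, ⟨_, h, rfl⟩⟩
      rw [bl, image_eq_zero_of_notMem_tsupport h2, smul_zero]
    · rw [bl, image_eq_zero_of_notMem_tsupport h1, zero_smul]
  · intro z hz j
    have hz' : z.1 = 0 := hz
    refine flat_smul hs hφ' (fun i => ?_) j
    refine flat_comp hk.smooth hπ (fun i => ?_) i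
    exact hk.2.2 (z.1, z.2.1 * z.1, z.2.2) ⟨hz', show z.2.1 * z.1 = 0 by rw [hz', mul_zero]⟩ i

lemma exists_kappa : ∃ κ : ℝ → ℝ, ContDiff ℝ ∞ κ ∧ (∀ a, |κ a| ≤ 4) ∧
    ∀ a, |a| ≤ 1 / 2 → κ a = (1 + a)⁻¹ := by
  let θ : ContDiffBump (0 : ℝ) := ⟨1 / 2, 3 / 4, by norm_num, by norm_num⟩
  have hθ : ContDiff ℝ ∞ (θ : ℝ → ℝ) := θ.contDiff
  have hb : ∀ a : ℝ, 1 / 4 ≤ 1 + θ a * a := by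
    intro a
    have h0 := θ.nonneg (x := a)
    have h1 := θ.le_one (x := a)
    rcases lt_or_ge |a| (3 / 4) with h | h
    · rw [abs_lt] at h
      nlinarith
    · rw [θ.zero_of_le_dist (by simpa using h)]
      norm_num
  refine ⟨fun a => (1 + θ a * a)⁻¹, ContDiff.inv (by fun_prop) (fun a => ?_), fun a => ?_, ?_⟩
  · have := hb a
    intro h; linarith
  · have h1 := hb a
    rw [abs_inv, abs_of_pos (by linarith)]
    rw [inv_le_comm₀ (by linarith) (by norm_num)]
    linarith
  · intro a ha
    simp only
    rw [θ.one_of_mem_closedBall (by simpa [θ] using ha), one_mul]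

lemma barrier {v v' : ℝ → ℝ} {t : ℝ} (ht : 0 ≤ t) (hd : ∀ s ∈ Icc 0 t, HasDerivAt v (v' s) s)
    (hb : ∀ s ∈ Icc 0 t, |v' s| ≤ s) (hv : 2 * t ^ 2 ≤ |v t|) :
    ∀ s ∈ Icc 0 t, 2 * s ^ 2 ≤ |v s| := by
  intro s hs
  have h1 := (convex_Icc s t).norm_image_sub_le_of_norm_hasDerivWithin_le (f := v) (f' := v')
    (C := t) (x := s) (y := t)
    (fun r hr => (hd r ⟨hs.1.trans hr.1, hr.2⟩).hasDerivWithinAt)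
    (fun r hr => (hb r ⟨hs.1.trans hr.1, hr.2⟩).trans hr.2)
    (left_mem_Icc.2 hs.2) (right_mem_Icc.2 hs.2)
  rw [Real.norm_eq_abs, Real.norm_eq_abs, abs_of_nonneg (by linarith [hs.2] : 0 ≤ t - s)] at h1
  have h2 := abs_sub_abs_le_abs_sub (v t) (v s)
  nlinarith [hs.1, hs.2]


lemma contDiff_of_tsupport' {k : A → G} (h : ∀ z ∈ tsupport k, ContDiffAt ℝ ∞ k z) :
    ContDiff ℝ ∞ k := by
  rw [contDiff_iff_contDiffAt]
  intro z
  by_cases hz : z ∈ tsupport k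
  · exact h z hz
  · have h1 := notMem_tsupport_iff_eventuallyEq.1 hz
    exact (contDiffAt_const (c := (0 : G))).congr_of_eventuallyEq h1

lemma hasDerivAt_q (n : ℕ) {x : ℝ} (hx : x ≠ 0) :
    HasDerivAt (fun x : ℝ => x⁻¹ * x ^ n) (((n : ℝ) - 1) * (x⁻¹ * x ^ n) / x) x := by
  refine ((hasDerivAt_inv hx).mul (hasDerivAt_pow n x)).congr_deriv ?_
  rcases n with _ | n
  · simp; field_simp
  · simp only [Nat.add_sub_cancel]; push_cast; field_simp; ring

theorem cone [FiniteDimensional ℝ F] (χ : ℝ → ℝ) (hχ : ContDiff ℝ ∞ χ)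
    (hχ0 : ∀ v, 2 ≤ |v| → χ v = 0) (n : ℕ)
    (Y1 Y2 : ℝ × ℝ × F → ℝ) (Yw : ℝ × ℝ × F → F) (g : ℝ × ℝ × F → ℝ)
    (hY1 : FlatC (X00 F) Y1) (hY2 : FlatC (X00 F) Y2) (hYw : FlatC (X00 F) Yw)
    (hg : FlatC (X00 F) g) :
    ∃ f : ℝ × ℝ × F → ℝ, ContDiff ℝ ∞ f ∧ f 0 = 0 ∧ fderiv ℝ f 0 = 0 ∧
      ∀ᶠ z in 𝓝 (0 : ℝ × ℝ × F),
        (0 < z.1 → fderiv ℝ f z (z.1 + Y1 z, -z.2.1 + Y2 z, Yw z) - ((n : ℝ) - 1) * f z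
          = χ (z.2.1 / z.1) * g z) ∧
        (z.1 ≤ 0 → f z = 0 ∧ fderiv ℝ f z = 0) := by
  have : CompleteSpace F := FiniteDimensional.complete ℝ F
  have hχc : HasCompactSupport χ := by
    refine HasCompactSupport.intro (isCompact_Icc (a := (-2 : ℝ)) (b := 2)) fun v hv => hχ0 v ?_
    by_contra h
    rw [not_le, abs_lt] at h
    exact hv ⟨h.1.le, h.2.le⟩
  let θ : ContDiffBump (0 : ℝ) := ⟨3, 4, by norm_num, by norm_num⟩
  have hθ : ContDiff ℝ ∞ (θ : ℝ → ℝ) := θ.contDiff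
  have hθ1 : ∀ v : ℝ, |v| ≤ 3 → θ v = 1 := fun v hv =>
    θ.one_of_mem_closedBall (by simpa [θ] using hv)
  obtain ⟨κ, hκs, hκ4, hκ⟩ := exists_kappa
  have f1 := bl_flat hθ θ.hasCompactSupport hY1
  have f2 := bl_flat hθ θ.hasCompactSupport hY2
  have fw := bl_flat hθ θ.hasCompactSupport hYw
  have fg := bl_flat hχ hχc hg
  have fu : FlatC (X0 F) (fun z => z.2.1 • bl θ Y1 z + bl θ Y2 z) :=
    (f1.smul (by fun_prop)).add f2
  set a : ℝ × ℝ × F → ℝ := HH 2 1 (bl θ Y1) with ha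
  set bu : ℝ × ℝ × F → ℝ := HH 2 0 (fun z => z.2.1 • bl θ Y1 z + bl θ Y2 z) with hbu
  set bw : ℝ × ℝ × F → F := HH 2 1 (bl θ Yw) with hbw
  set c0 : ℝ × ℝ × F → ℝ := HH 2 2 (bl θ Y1) with hc0
  set g0 : ℝ × ℝ × F → ℝ := HH 2 n (bl χ g) with hg0
  have sa : ContDiff ℝ ∞ a := HH_smooth _ _ f1
  have sbu : ContDiff ℝ ∞ bu := HH_smooth _ _ fu
  have sbw : ContDiff ℝ ∞ bw := HH_smooth _ _ fw
  have sc0 : ContDiff ℝ ∞ c0 := HH_smooth _ _ f1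
  have sg0 : ContDiff ℝ ∞ g0 := HH_smooth _ _ fg
  have cbu : HasCompactSupport bu := HH_cpt _ _ fu.cpt
  have cbw : HasCompactSupport bw := HH_cpt _ _ fw.cpt
  have cc0 : HasCompactSupport c0 := HH_cpt _ _ f1.cpt
  have cg0 : HasCompactSupport g0 := HH_cpt _ _ fg.cpt
  have sκ : ContDiff ℝ ∞ (fun z => κ (a z)) := hκs.comp sa
  let B : ℝ × ℝ × F → ℝ × F := fun z => (κ (a z) * bu z, κ (a z) • bw z)
  let c : ℝ × ℝ × F → ℝ := fun z => -((n : ℝ) - 1) * (κ (a z) * c0 z)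
  let gt : ℝ × ℝ × F → ℝ := fun z => κ (a z) * g0 z
  have hBs : ContDiff ℝ ∞ B := (sκ.mul sbu).prodMk (sκ.smul sbw)
  have hBc : HasCompactSupport B := by
    refine HasCompactSupport.intro (cbu.isCompact.union cbw.isCompact) fun z hz => ?_
    simp only [mem_union, not_or] at hz
    simp [B, image_eq_zero_of_notMem_tsupport hz.1, image_eq_zero_of_notMem_tsupport hz.2]
  have hcs : ContDiff ℝ ∞ c := contDiff_const.mul (sκ.mul sc0)
  have hcc : HasCompactSupport c := (cc0.mul_left (f := fun z => κ (a z))).mul_left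
  have hgs : ContDiff ℝ ∞ gt := sκ.mul sg0
  have hgc : HasCompactSupport gt := cg0.mul_left
  obtain ⟨ε, hε, h, hhs, hpde, hchar⟩ := transport (E := ℝ × F) B c gt hBs hcs hgs hBc hcc hgc
  -- bound on the `u` component
  obtain ⟨C, hC0, hC⟩ := HH_decay 2 0 2 fu
  set εa : ℝ := min ε (1 / (4 * C + 1)) with hεa
  have hεap : 0 < εa := lt_min hε (by positivity)
  have hBu : ∀ z : ℝ × ℝ × F, |z.1| < εa → |(B z).1| ≤ |z.1| := by
    intro z hz
    have h1 : |z.1| < 1 / (4 * C + 1) := hz.trans_le (min_le_right _ _)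
    rw [lt_div_iff₀ (by positivity)] at h1
    show |κ (a z) * bu z| ≤ _
    rw [abs_mul]
    have h2 : |bu z| ≤ C * |z.1| ^ 2 := hC z
    calc |κ (a z)| * |bu z| ≤ 4 * (C * |z.1| ^ 2) := by
          gcongr
          exact hκ4 _
      _ ≤ |z.1| := by nlinarith [abs_nonneg z.1]
  have hzero : ∀ t p, |t| < εa → (t ≤ 0 ∨ 2 * t ^ 2 ≤ |p.1|) → h (t, p) = 0 := by
    intro t p ht hcase
    obtain ⟨γ, hγt, hγd, hγ0⟩ := hchar t p (ht.trans_le (min_le_left _ _))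
    apply hγ0
    rcases le_or_gt t 0 with htn | htp
    · intro s hs
      rw [uIcc_of_ge htn] at hs
      show κ _ * g0 _ = 0
      rw [hg0, HH_neg _ _ _ (by exact hs.2), mul_zero]
    · have hcase' := hcase.resolve_left (not_le.2 htp)
      rw [uIcc_of_le htp.le] at hγd ⊢
      have hbar := barrier (v := fun s => (γ s).1) (v' := fun s => (B (s, γ s)).1) htp.le
        (fun s hs => hasDerivAt_fst' (hγd s hs)) (fun s hs => by
          have h1 : |s| < εa := by
            rw [abs_of_nonneg hs.1]; exact hs.2.trans_lt (lt_of_abs_lt ht)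
          have := hBu (s, γ s) h1
          simpa [abs_of_nonneg hs.1] using this) (by simpa [hγt] using hcase')
      intro s hs
      show κ _ * g0 _ = 0
      rcases hs.1.eq_or_lt with h0 | h0
      · rw [hg0, HH_neg _ _ _ (by exact h0.symm.le), mul_zero]
      · rw [hg0, HH_pos _ _ _ (by exact h0)]
        have : χ ((γ s).1 / s ^ 2) = 0 := by
          apply hχ0
          rw [abs_div, abs_of_pos (by positivity : 0 < s ^ 2), le_div_iff₀ (by positivity)]
          exact hbar s hs
        simp [bl, this]
  have hopen : IsOpen {x : ℝ × ℝ × F | |x.1| < ε} := isOpen_lt (by fun_prop) continuous_const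
  -- the function
  let ρ : ContDiffBump (0 : ℝ × ℝ × F) :=
    ⟨εa / 3, εa / 2, by positivity, by linarith⟩
  have hρs : ContDiff ℝ ∞ (ρ : ℝ × ℝ × F → ℝ) := ρ.contDiff
  have hρ0 : ∀ z : ℝ × ℝ × F, εa ≤ |z.1| → ρ z = 0 := by
    intro z hz
    apply ρ.zero_of_le_dist
    rw [dist_zero_right]
    have h1 := norm_fst_le z
    rw [Real.norm_eq_abs] at h1
    show εa / 2 ≤ _
    linarith
  let bd : ℝ × ℝ × F → ℝ × ℝ × F := fun z => (z.1, z.1 * z.2.1, z.2.2)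
  have hbds : ContDiff ℝ ∞ bd := by fun_prop
  let kf : ℝ × ℝ × F → ℝ := fun z => ρ z * (z.1 ^ n * h (bd z))
  have hkfs : ContDiff ℝ ∞ kf := by
    refine contDiff_of_tsupport' fun z hz => ?_
    have h1 : z ∈ tsupport ρ := tsupport_mul_subset_left hz
    rw [ρ.tsupport_eq, mem_closedBall_zero_iff] at h1
    have h2 : |z.1| < ε := by
      have h3 := (norm_fst_le z).trans h1
      rw [Real.norm_eq_abs] at h3
      have h4 : εa ≤ ε := min_le_left _ _
      have h5 : ρ.rOut = εa / 2 := rfl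
      linarith
    have h6 : ContDiffAt ℝ ∞ h (bd z) := hhs.contDiffAt (hopen.mem_nhds h2)
    have h7 : ContDiffAt ℝ ∞ (fun z => h (bd z)) z := h6.comp z hbds.contDiffAt
    have h8 : ContDiffAt ℝ ∞ (fun z : ℝ × ℝ × F => z.1 ^ n) z := by fun_prop
    exact hρs.contDiffAt.mul (h8.mul h7)
  have hkf0 : ∀ z : ℝ × ℝ × F, z.1 ≤ 0 → kf z = 0 := by
    intro z hz
    show ρ z * (z.1 ^ n * h (z.1, z.1 * z.2.1, z.2.2)) = 0
    rcases lt_or_ge |z.1| εa with h1 | h1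
    · rw [hzero z.1 _ h1 (Or.inl hz), mul_zero, mul_zero]
    · rw [hρ0 z h1, zero_mul]
  have hkf : FlatC (X0 F) kf := by
    refine ⟨hkfs, ρ.hasCompactSupport.mul_right, fun z hz j => ?_⟩
    have hO : IsOpen {z : ℝ × ℝ × F | z.1 < 0} := isOpen_lt (by fun_prop) continuous_const
    refine flat_of_zero hkfs hO (fun y hy => hkf0 y (le_of_lt hy)) j ?_
    have hz' : z.1 = 0 := hz
    have ht : Tendsto (fun s : ℝ => ((s, z.2) : ℝ × ℝ × F)) (𝓝[<] 0) (𝓝 z) := by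
      have h1 : Continuous (fun s : ℝ => ((s, z.2) : ℝ × ℝ × F)) := by fun_prop
      have h2 := h1.tendsto 0
      have h3 : ((0, z.2) : ℝ × ℝ × F) = z := by rw [← hz']
      rw [h3] at h2
      exact h2.mono_left nhdsWithin_le_nhds
    refine mem_closure_of_tendsto ht ?_
    filter_upwards [self_mem_nhdsWithin] with s hs
    exact hs
  refine ⟨HH 0 1 kf, HH_smooth _ _ hkf, HH_neg _ _ _ le_rfl, ?_, ?_⟩
  · rw [(HH_hasFDerivAt 0 1 hkf 0).fderiv, HH_neg _ _ _ le_rfl, HH_neg _ _ _ le_rfl,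
      HH_neg _ _ _ le_rfl]
    simp
  have hform : ∀ z : ℝ × ℝ × F, ‖z‖ < εa / 3 → 0 < z.1 →
      HH 0 1 kf z = z.1⁻¹ * z.1 ^ n * h (bd z) := by
    intro z hz hz0
    rw [HH_pos _ _ _ hz0]
    have : ρ z = 1 := ρ.one_of_mem_closedBall (by
      rw [mem_closedBall_zero_iff]; exact hz.le)
    simp only [pow_zero, div_one, pow_one, smul_eq_mul, kf]
    rw [this]
    ring
  have hbd0 : Tendsto bd (𝓝 0) (𝓝 0) := by
    have h1 := hbds.continuous.tendsto 0
    have h2 : bd 0 = 0 := by simp [bd]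
    rwa [h2] at h1
  have hball : ∀ᶠ z : ℝ × ℝ × F in 𝓝 0, ‖z‖ < εa / 3 := by
    have := Metric.ball_mem_nhds (0 : ℝ × ℝ × F) (by positivity : 0 < εa / 3)
    filter_upwards [this] with z hz
    simpa using hz
  have ha0 : a 0 = 0 := HH_neg _ _ _ le_rfl
  have hasm : ∀ᶠ z : ℝ × ℝ × F in 𝓝 0, |a z| < 1 / 2 := by
    have := (continuous_abs.comp sa.continuous).tendsto 0
    refine this.eventually_lt_const ?_
    simp [ha0]
  filter_upwards [hball, hbd0.eventually hpde, hbd0.eventually hasm] with z hz hzp hza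
  refine ⟨fun hz0 => ?_, fun hz0 => ⟨HH_neg _ _ _ hz0, ?_⟩⟩
  swap
  · rw [(HH_hasFDerivAt 0 1 hkf z).fderiv, HH_neg _ _ _ hz0, HH_neg _ _ _ hz0,
      HH_neg _ _ _ hz0]
    simp
  have hnear : ∀ᶠ y : ℝ × ℝ × F in 𝓝 z, ‖y‖ < εa / 3 ∧ 0 < y.1 :=
    (continuous_norm.tendsto z).eventually_lt_const hz |>.and
      ((continuous_fst.tendsto z).eventually_const_lt hz0)
  have hx1 : |z.1| < εa := by
    have := norm_fst_le z
    rw [Real.norm_eq_abs] at this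
    linarith
  rcases lt_or_ge (2 * z.1) |z.2.1| with hfar | hclose
  · -- outside of the cone everything vanishes
    have hnear2 : ∀ᶠ y : ℝ × ℝ × F in 𝓝 z, 2 * y.1 < |y.2.1| := by
      have : Continuous (fun y : ℝ × ℝ × F => |y.2.1| - 2 * y.1) := by fun_prop
      have := (this.tendsto z).eventually_const_lt (show 0 < |z.2.1| - 2 * z.1 by linarith)
      filter_upwards [this] with y hy
      linarith
    have hfz : HH 0 1 kf =ᶠ[𝓝 z] fun _ => 0 := by
      filter_upwards [hnear, hnear2] with y hy1 hy2
      rw [hform y hy1.1 hy1.2]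
      have hy3 : |y.1| < εa := by
        have := norm_fst_le y
        rw [Real.norm_eq_abs] at this
        linarith [hy1.1]
      have : h (y.1, y.1 * y.2.1, y.2.2) = 0 := by
        apply hzero _ _ hy3 (Or.inr _)
        show 2 * y.1 ^ 2 ≤ |y.1 * y.2.1|
        rw [abs_mul, abs_of_pos hy1.2]
        nlinarith [hy1.2]
      rw [show bd y = (y.1, y.1 * y.2.1, y.2.2) from rfl, this, mul_zero]
    rw [hfz.fderiv_eq, hfz.eq_of_nhds, hχ0 _ _]
    · simp
    · rw [abs_div, abs_of_pos hz0, le_div_iff₀ hz0]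
      exact hfar.le
  · have hfz : HH 0 1 kf =ᶠ[𝓝 z] fun y => y.1⁻¹ * y.1 ^ n * h (bd y) := by
      filter_upwards [hnear] with y hy
      exact hform y hy.1 hy.2
    have hx0 : z.1 ≠ 0 := hz0.ne'
    have hθz : θ (z.2.1 / z.1) = 1 := by
      apply hθ1
      rw [abs_div, abs_of_pos hz0, div_le_iff₀ hz0]
      linarith
    have hdiv : z.1 * z.2.1 / z.1 ^ 2 = z.2.1 / z.1 := by field_simp
    have hdm : z.2.1 / z.1 * z.1 = z.2.1 := by field_simp
    have ez : ((z.1, z.2.1, z.2.2) : ℝ × ℝ × F) = z := rfl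
    have ea : a (bd z) = Y1 z / z.1 := by
      rw [ha, HH_pos _ _ _ (by exact hz0)]
      simp only [bd, bl, hdiv, hdm, hθz, ez, pow_one, smul_eq_mul, one_mul]
      field_simp
    have ebu : bu (bd z) = z.2.1 / z.1 * Y1 z + Y2 z := by
      rw [hbu, HH_pos _ _ _ (by exact hz0)]
      simp only [bd, bl, hdiv, hdm, hθz, ez, pow_zero, smul_eq_mul, one_mul, inv_one]
    have ebw : bw (bd z) = z.1⁻¹ • Yw z := by
      rw [hbw, HH_pos _ _ _ (by exact hz0)]
      simp only [bd, bl, hdiv, hdm, hθz, ez, pow_one, one_smul]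
    have ec0 : c0 (bd z) = Y1 z / z.1 ^ 2 := by
      rw [hc0, HH_pos _ _ _ (by exact hz0)]
      simp only [bd, bl, hdiv, hdm, hθz, ez, smul_eq_mul, one_mul]
      field_simp
    have eg0 : g0 (bd z) = (z.1 ^ n)⁻¹ * (χ (z.2.1 / z.1) * g z) := by
      rw [hg0, HH_pos _ _ _ (by exact hz0)]
      simp only [bd, bl, hdiv, hdm, ez, smul_eq_mul]
    have h1a : (1 : ℝ) + a (bd z) ≠ 0 := by
      have := (abs_lt.1 hza).1
      intro h; linarith
    have ek : κ (a (bd z)) = (1 + a (bd z))⁻¹ := hκ _ hza.le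
    have hhd : HasFDerivAt h (fderiv ℝ h (bd z)) (bd z) :=
      ((hhs.contDiffAt (hopen.mem_nhds (show bd z ∈ {x : ℝ × ℝ × F | |x.1| < ε} from
        hx1.trans_le (min_le_left _ _)))).differentiableAt (by simp)).hasFDerivAt
    have hxd : HasFDerivAt (fun y : ℝ × ℝ × F => y.1) (dX F) z := (dX F).hasFDerivAt
    have hyd : HasFDerivAt (fun y : ℝ × ℝ × F => y.2.1) (dU F) z := (dU F).hasFDerivAt
    have hwd : HasFDerivAt (fun y : ℝ × ℝ × F => y.2.2) (dW F) z := (dW F).hasFDerivAt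
    have hbdd : HasFDerivAt bd ((dX F).prod ((z.1 • dU F + z.2.1 • dX F).prod (dW F))) z :=
      hxd.prodMk ((hxd.mul hyd).prodMk hwd)
    have hq : HasFDerivAt (fun y : ℝ × ℝ × F => y.1⁻¹ * y.1 ^ n)
        ((((n : ℝ) - 1) * (z.1⁻¹ * z.1 ^ n) / z.1) • dX F) z := by
      have h1 : HasDerivAt (fun x : ℝ => x⁻¹ * x ^ n)
          (((n : ℝ) - 1) * (z.1⁻¹ * z.1 ^ n) / z.1) z.1 := by
        exact hasDerivAt_q n hx0
      exact h1.comp_hasFDerivAt z hxd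
    have hfd := (hq.mul (hhd.comp z hbdd)).congr_of_eventuallyEq hfz
    rw [hfd.fderiv, hfz.eq_of_nhds]
    have hvec : ((dX F).prod ((z.1 • dU F + z.2.1 • dX F).prod (dW F)))
        (z.1 + Y1 z, -z.2.1 + Y2 z, Yw z) = (z.1 * (1 + a (bd z))) • ((1, B (bd z)) : ℝ × ℝ × F) := by
      have hB : B (bd z) = (κ (a (bd z)) * bu (bd z), κ (a (bd z)) • bw (bd z)) := rfl
      rw [hB, ek, ebu, ebw]
      ext
      · simp [dX, ea]; field_simp
      · simp [dX, dU]; field_simp; ring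
      · show Yw z = (z.1 * (1 + a (bd z))) • (1 + a (bd z))⁻¹ • z.1⁻¹ • Yw z
        rw [smul_smul, smul_smul]
        have : z.1 * (1 + a (bd z)) * (1 + a (bd z))⁻¹ * z.1⁻¹ = 1 := by field_simp
        rw [this, one_smul]
    simp only [add_apply, smul_apply, ContinuousLinearMap.comp_apply, Function.comp_apply]
    rw [hvec, map_smul, hzp]
    have ec : c (bd z) = -((n : ℝ) - 1) * (κ (a (bd z)) * c0 (bd z)) := rfl
    have eg : gt (bd z) = κ (a (bd z)) * g0 (bd z) := rfl
    have e1 : dX F (z.1 + Y1 z, -z.2.1 + Y2 z, Yw z) = z.1 * (1 + a (bd z)) := by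
      rw [ea]; simp [dX]; field_simp
    rw [ec, eg, ek, ec0, eg0, e1]
    have eY : Y1 z = z.1 * a (bd z) := by rw [ea]; field_simp
    rw [eY]
    generalize χ (z.2.1 / z.1) * g z = R
    generalize h (bd z) = hh
    simp only [smul_eq_mul]
    field_simp
    ring
end ConePart

section SolvePart
set_option linter.unusedSectionVars false
open Set Filter Topology

variable {A : Type} [NormedAddCommGroup A] [NormedSpace ℝ A]
variable {A' : Type} [NormedAddCommGroup A'] [NormedSpace ℝ A']
variable {G : Type} [NormedAddCommGroup G] [NormedSpace ℝ G]
variable {F : Type} [NormedAddCommGroup F] [NormedSpace ℝ F]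

lemma FlatC.comp_equiv {S : Set A} {S' : Set A'} {k : A → G} (h : FlatC S k) (T : A' ≃L[ℝ] A)
    (hT : ∀ z ∈ S', T z ∈ S) : FlatC S' (fun z => k (T z)) :=
  ⟨h.1.comp T.contDiff, h.2.1.comp_homeomorph T.toHomeomorph, fun z hz j =>
    flat_comp h.1 T.contDiff (fun i => h.2.2 _ (hT z hz) i) j⟩

/-- the cut-off function. -/
noncomputable def chi (v : ℝ) : ℝ := Real.smoothTransition (2 / (1 + v ^ 2) - 1 / 2)

lemma chi_smooth : ContDiff ℝ ∞ chi := by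
  unfold chi
  refine Real.smoothTransition.contDiff.comp ?_
  refine (contDiff_const.div (by fun_prop) ?_).sub contDiff_const
  intro v
  positivity

lemma chi_far (v : ℝ) (hv : 2 ≤ |v|) : chi v = 0 := by
  apply Real.smoothTransition.zero_of_nonpos
  have h1 : 4 ≤ v ^ 2 := by rw [← sq_abs]; nlinarith
  have : 2 / (1 + v ^ 2) ≤ 1 / 2 := by
    rw [div_le_div_iff₀ (by positivity) (by norm_num)]; linarith
  linarith

lemma chi_zero : chi 0 = 1 := by
  apply Real.smoothTransition.one_of_one_le
  norm_num

lemma chi_neg (v : ℝ) : chi (-v) = chi v := by simp [chi]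

lemma smoothTransition_add (x : ℝ) :
    Real.smoothTransition x + Real.smoothTransition (1 - x) = 1 := by
  unfold Real.smoothTransition
  have := Real.smoothTransition.pos_denom x
  rw [sub_sub_cancel, add_comm (expNegInvGlue (1 - x))]
  field_simp

lemma chi_add {x y : ℝ} (hx : x ≠ 0) (hy : y ≠ 0) : chi (y / x) + chi (x / y) = 1 := by
  have h : 2 / (1 + (x / y) ^ 2) - 1 / 2 = 1 - (2 / (1 + (y / x) ^ 2) - 1 / 2) := by
    field_simp
    ring
  unfold chi
  rw [h, smoothTransition_add]

theorem cone_equiv [FiniteDimensional ℝ F] {S : Set A} (T : A ≃L[ℝ] ℝ × ℝ × F)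
    (hTS : ∀ z, T.symm z ∈ S ↔ z ∈ X00 F) (e : ℝ) (he : e * e = 1) (L : A → A)
    (hL : ∀ z, T (L z) = e • ((T z).1, -(T z).2.1, (0 : F)))
    (Y : A → A) (g : A → ℝ) (hY : FlatC S Y) (hg : FlatC S g) (n : ℕ) :
    ∃ f : A → ℝ, ContDiff ℝ ∞ f ∧ f 0 = 0 ∧ fderiv ℝ f 0 = 0 ∧
      ∀ᶠ z in 𝓝 (0 : A), fderiv ℝ f z (L z + Y z) - e * ((n : ℝ) - 1) * f z
        = (open Classical in if 0 < (T z).1 then chi ((T z).2.1 / (T z).1) else 0) * g z := by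
  have hYT : FlatC (X00 F) (fun z => e • T (Y (T.symm z))) := by
    have h1 : FlatC (X00 F) (fun z => Y (T.symm z)) :=
      hY.comp_equiv T.symm (fun z hz => (hTS z).2 hz)
    exact (h1.clm (T := fun _ => (T : A →L[ℝ] ℝ × ℝ × F)) contDiff_const).smul contDiff_const
  have hgT : FlatC (X00 F) (fun z => e • g (T.symm z)) :=
    (hg.comp_equiv T.symm (fun z hz => (hTS z).2 hz)).smul contDiff_const
  obtain ⟨f, hf, hf0, hfd0, hev⟩ := cone chi chi_smooth chi_far n
    _ _ _ _
    (hYT.clm (T := fun _ => dX F) contDiff_const)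
    (hYT.clm (T := fun _ => dU F) contDiff_const)
    (hYT.clm (T := fun _ => dW F) contDiff_const) hgT
  have hfd : ∀ z, HasFDerivAt (fun z => f (T z)) ((fderiv ℝ f (T z)).comp (T : A →L[ℝ] ℝ × ℝ × F)) z :=
    fun z => (hf.differentiable (by simp) (T z)).hasFDerivAt.comp z T.hasFDerivAt
  refine ⟨fun z => f (T z), hf.comp T.contDiff, by simpa using hf0, ?_, ?_⟩
  · rw [(hfd 0).fderiv, map_zero, hfd0]
    simp
  · have hT0 : Tendsto T (𝓝 0) (𝓝 0) := by
      have := T.continuous.tendsto 0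
      rwa [map_zero] at this
    filter_upwards [hT0.eventually hev] with z hz
    rw [(hfd z).fderiv]
    split_ifs with h
    · have h1 := hz.1 h
      simp only [T.symm_apply_apply, smul_eq_mul] at h1
      have h2 : T (L z + Y z) = e • ((T z).1 + dX F (e • T (Y z)), -(T z).2.1 + dU F (e • T (Y z)),
          dW F (e • T (Y z))) := by
        have h3 : (((T z).1 + dX F (e • T (Y z)), -(T z).2.1 + dU F (e • T (Y z)),
          dW F (e • T (Y z))) : ℝ × ℝ × F) = ((T z).1, -(T z).2.1, (0 : F)) + e • T (Y z) := by
          ext <;> simp [dX, dU, dW]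
        rw [h3, map_add, hL, smul_add, smul_smul, he, one_smul]
      rw [ContinuousLinearMap.comp_apply, ContinuousLinearEquiv.coe_coe, h2, map_smul, smul_eq_mul]
      linear_combination e * h1 + chi ((T z).2.1 / (T z).1) * g z * he
    · have h1 := hz.2 (not_lt.1 h)
      rw [h1.1, h1.2]
      simp


/-- coordinates. -/
def T0lin (m : ℕ) : (Fin (m + 2) → ℝ) ≃ₗ[ℝ] ℝ × ℝ × (Fin m → ℝ) where
  toFun z := (z 0, z 1, fun i => z i.succ.succ)
  invFun p := Matrix.vecCons p.1 (Matrix.vecCons p.2.1 p.2.2)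
  map_add' := by intros; rfl
  map_smul' := by intros; rfl
  left_inv := by
    intro z
    ext i
    refine Fin.cases rfl (fun i => ?_) i
    refine Fin.cases rfl (fun i => ?_) i
    rfl
  right_inv := by
    intro p
    rfl

def nxlin (F : Type) [NormedAddCommGroup F] [NormedSpace ℝ F] : (ℝ × ℝ × F) ≃ₗ[ℝ] ℝ × ℝ × F where
  toFun z := (-z.1, z.2.1, z.2.2)
  invFun z := (-z.1, z.2.1, z.2.2)
  map_add' := by intro x y; ext <;> simp [add_comm]
  map_smul' := by intro x y; ext <;> simp
  left_inv := by intro z; simp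
  right_inv := by intro z; simp

def swlin (F : Type) [NormedAddCommGroup F] [NormedSpace ℝ F] : (ℝ × ℝ × F) ≃ₗ[ℝ] ℝ × ℝ × F where
  toFun z := (z.2.1, z.1, z.2.2)
  invFun z := (z.2.1, z.1, z.2.2)
  map_add' := by intro x y; rfl
  map_smul' := by intro x y; rfl
  left_inv := by intro z; rfl
  right_inv := by intro z; rfl

def SS (m : ℕ) : Set (Fin (m + 2) → ℝ) := {z | z 0 = 0 ∧ z 1 = 0}

lemma Lvf_zero (z : Fin (m + 2) → ℝ) : Lvf z 0 = z 0 := rfl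

lemma Lvf_one (z : Fin (m + 2) → ℝ) : Lvf z 1 = -z 1 := by simp [Lvf]

lemma Lvf_succ (z : Fin (m + 2) → ℝ) (i : Fin m) : Lvf z i.succ.succ = 0 := by
  have h1 : i.succ.succ ≠ (1 : Fin (m + 2)) := by
    intro h
    have := congrArg Fin.val h
    simp at this
  have h0 : i.succ.succ ≠ (0 : Fin (m + 2)) := Fin.succ_ne_zero _
  unfold Lvf
  rw [if_neg h0, if_neg h1]

lemma Lvf_succ' (z : Fin (m + 2) → ℝ) :
    (fun i : Fin m => Lvf z i.succ.succ) = 0 := funext fun i => Lvf_succ z i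

theorem solve (Y : (Fin (m + 2) → ℝ) → (Fin (m + 2) → ℝ)) (g : (Fin (m + 2) → ℝ) → ℝ)
    (hY : FlatC (SS m) Y) (hg : FlatC (SS m) g) (n1 n2 : ℕ) (hn : n1 + n2 = 2) :
    ∃ f : (Fin (m + 2) → ℝ) → ℝ, ContDiff ℝ ∞ f ∧ f 0 = 0 ∧ fderiv ℝ f 0 = 0 ∧
      ∀ᶠ z in 𝓝 (0 : Fin (m + 2) → ℝ),
        fderiv ℝ f z (Lvf z + Y z) - ((n1 : ℝ) - 1) * f z = g z := by
  have hn' : (n1 : ℝ) + n2 = 2 := by exact_mod_cast hn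
  obtain ⟨f1, s1, z1, d1, e1⟩ := cone_equiv (S := SS m)
    (T0lin m).toContinuousLinearEquiv (by intro z; rfl) 1
    (by norm_num) Lvf (by
      intro z
      show ((Lvf z 0, Lvf z 1, (fun i : Fin m => Lvf z i.succ.succ)) : ℝ × ℝ × (Fin m → ℝ)) = (1 : ℝ) • (z 0, -z 1, (0 : Fin m → ℝ))
      rw [Lvf_zero, Lvf_one, Lvf_succ']
      simp) Y g hY hg n1
  obtain ⟨f2, s2, z2, d2, e2⟩ := cone_equiv (S := SS m)
    ((T0lin m).trans (nxlin _)).toContinuousLinearEquiv (by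
      intro z; show (-z.1 = 0 ∧ z.2.1 = 0) ↔ (z.1 = 0 ∧ z.2.1 = 0); rw [neg_eq_zero]) 1
    (by norm_num) Lvf (by
      intro z
      show ((-Lvf z 0, Lvf z 1, (fun i : Fin m => Lvf z i.succ.succ)) : ℝ × ℝ × (Fin m → ℝ)) = (1 : ℝ) • (-z 0, -z 1, (0 : Fin m → ℝ))
      rw [Lvf_zero, Lvf_one, Lvf_succ']
      simp) Y g hY hg n1
  obtain ⟨f3, s3, z3, d3, e3⟩ := cone_equiv (S := SS m)
    ((T0lin m).trans (swlin _)).toContinuousLinearEquiv (by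
      intro z; show (z.2.1 = 0 ∧ z.1 = 0) ↔ (z.1 = 0 ∧ z.2.1 = 0); rw [and_comm]) (-1)
    (by norm_num) Lvf (by
      intro z
      show ((Lvf z 1, Lvf z 0, (fun i : Fin m => Lvf z i.succ.succ)) : ℝ × ℝ × (Fin m → ℝ)) = (-1 : ℝ) • (z 1, -z 0, (0 : Fin m → ℝ))
      rw [Lvf_zero, Lvf_one, Lvf_succ']
      simp) Y g hY hg n2
  obtain ⟨f4, s4, z4, d4, e4⟩ := cone_equiv (S := SS m)
    (((T0lin m).trans (swlin _)).trans (nxlin _)).toContinuousLinearEquiv (by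
      intro z; show (z.2.1 = 0 ∧ -z.1 = 0) ↔ (z.1 = 0 ∧ z.2.1 = 0)
      rw [and_comm, neg_eq_zero]) (-1)
    (by norm_num) Lvf (by
      intro z
      show ((-Lvf z 1, Lvf z 0, (fun i : Fin m => Lvf z i.succ.succ)) : ℝ × ℝ × (Fin m → ℝ)) = (-1 : ℝ) • (-z 1, -z 0, (0 : Fin m → ℝ))
      rw [Lvf_zero, Lvf_one, Lvf_succ']
      simp) Y g hY hg n2
  have hd : ∀ z, HasFDerivAt (fun z => f1 z + f2 z + f3 z + f4 z)
      (fderiv ℝ f1 z + fderiv ℝ f2 z + fderiv ℝ f3 z + fderiv ℝ f4 z) z := fun z =>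
    ((((s1.differentiable (by simp) z).hasFDerivAt).add
      (s2.differentiable (by simp) z).hasFDerivAt).add
      (s3.differentiable (by simp) z).hasFDerivAt).add
      (s4.differentiable (by simp) z).hasFDerivAt
  refine ⟨fun z => f1 z + f2 z + f3 z + f4 z, ((s1.add s2).add s3).add s4, ?_, ?_, ?_⟩
  · simp [z1, z2, z3, z4]
  · rw [(hd 0).fderiv, d1, d2, d3, d4]; simp
  · filter_upwards [e1, e2, e3, e4] with z e1 e2 e3 e4
    rw [(hd z).fderiv]
    simp only [add_apply]
    change fderiv ℝ f1 z (Lvf z + Y z) - (1 : ℝ) * ((n1 : ℝ) - 1) * f1 z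
      = (open Classical in if 0 < z 0 then chi (z 1 / z 0) else 0) * g z at e1
    change fderiv ℝ f2 z (Lvf z + Y z) - (1 : ℝ) * ((n1 : ℝ) - 1) * f2 z
      = (open Classical in if 0 < -z 0 then chi (z 1 / -z 0) else 0) * g z at e2
    change fderiv ℝ f3 z (Lvf z + Y z) - (-1 : ℝ) * ((n2 : ℝ) - 1) * f3 z
      = (open Classical in if 0 < z 1 then chi (z 0 / z 1) else 0) * g z at e3
    change fderiv ℝ f4 z (Lvf z + Y z) - (-1 : ℝ) * ((n2 : ℝ) - 1) * f4 z
      = (open Classical in if 0 < -z 1 then chi (z 0 / -z 1) else 0) * g z at e4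
    have hsum : ((open Classical in if 0 < z 0 then chi (z 1 / z 0) else 0)
      + (open Classical in if 0 < -z 0 then chi (z 1 / -z 0) else 0)
      + (open Classical in if 0 < z 1 then chi (z 0 / z 1) else 0)
      + (open Classical in if 0 < -z 1 then chi (z 0 / -z 1) else 0)) * g z = g z := by
      simp only [div_neg, chi_neg, neg_pos]
      rcases eq_or_ne (z 0) 0 with h0 | h0 <;> rcases eq_or_ne (z 1) 0 with h1 | h1
      · rw [hg.apply_zero (show z ∈ SS m from ⟨h0, h1⟩), mul_zero]
      · rcases lt_or_gt_of_ne h1 with h1' | h1' <;>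
          simp [h0, h1', h1'.not_gt, chi_zero]
      · rcases lt_or_gt_of_ne h0 with h0' | h0' <;>
          simp [h1, h0', h0'.not_gt, chi_zero]
      · have hc := chi_add h0 h1
        have hc' : chi (z 0 / z 1) = 1 - chi (z 1 / z 0) := by linarith
        rcases lt_or_gt_of_ne h0 with h0' | h0' <;> rcases lt_or_gt_of_ne h1 with h1' | h1' <;>
          simp [h0', h0'.not_gt, h1', h1'.not_gt, hc']
    rw [← hsum]
    have hn2 : (n2 : ℝ) = 2 - n1 := by linarith
    rw [hn2] at e3 e4
    linear_combination e1 + e2 + e3 + e4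

end SolvePart

section FinalPart
open Set Filter Topology

/-- `ψ` is a smooth map tangent to the identity which linearizes `X` near `0`. -/
def Good (X : (Fin (m + 2) → ℝ) → (Fin (m + 2) → ℝ))
    (ψ : (Fin (m + 2) → ℝ) → (Fin (m + 2) → ℝ)) : Prop :=
  ContDiff ℝ ∞ ψ ∧ ψ 0 = 0 ∧ fderiv ℝ ψ 0 = ContinuousLinearMap.id ℝ _ ∧
    ∀ᶠ z in 𝓝 (0 : Fin (m + 2) → ℝ), fderiv ℝ ψ z (X z) = Lvf (ψ z)

/-- reflection in the `k`-th coordinate. -/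
noncomputable def reflL (k : Fin (m + 2)) : (Fin (m + 2) → ℝ) →L[ℝ] (Fin (m + 2) → ℝ) :=
  ContinuousLinearMap.pi fun i => if i = k then -ContinuousLinearMap.proj i
    else ContinuousLinearMap.proj i

lemma reflL_apply (k : Fin (m + 2)) (z : Fin (m + 2) → ℝ) (i : Fin (m + 2)) :
    reflL k z i = if i = k then -z i else z i := by
  unfold reflL
  rw [ContinuousLinearMap.pi_apply]
  split_ifs <;> simp

lemma sig_eq : (sig : (Fin (m + 2) → ℝ) → _) = reflL 0 := by
  funext z i; rw [reflL_apply]; rfl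

lemma del_eq : (del : (Fin (m + 2) → ℝ) → _) = reflL 1 := by
  funext z i; rw [reflL_apply]; rfl

lemma reflL_reflL (k : Fin (m + 2)) (z : Fin (m + 2) → ℝ) : reflL k (reflL k z) = z := by
  ext i; simp only [reflL_apply]; split_ifs <;> simp

lemma reflL_comm (k l : Fin (m + 2)) (z : Fin (m + 2) → ℝ) :
    reflL k (reflL l z) = reflL l (reflL k z) := by
  ext i; simp only [reflL_apply]; split_ifs <;> simp

lemma Lvf_reflL (k : Fin (m + 2)) (z : Fin (m + 2) → ℝ) :
    Lvf (reflL k z) = reflL k (Lvf z) := by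
  ext i
  simp only [reflL_apply, Lvf]
  split_ifs <;> simp_all

lemma Lvf_add (z w : Fin (m + 2) → ℝ) : Lvf (z + w) = Lvf z + Lvf w := by
  ext i; simp only [Lvf, Pi.add_apply]; split_ifs <;> ring

lemma Lvf_smul (c : ℝ) (z : Fin (m + 2) → ℝ) : Lvf (c • z) = c • Lvf z := by
  ext i; simp only [Lvf, Pi.smul_apply, smul_eq_mul]; split_ifs <;> ring

lemma norm_reflL_le (k : Fin (m + 2)) (z : Fin (m + 2) → ℝ) : ‖reflL k z‖ ≤ ‖z‖ := by
  refine (pi_norm_le_iff_of_nonneg (norm_nonneg _)).2 fun i => ?_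
  rw [reflL_apply]
  split_ifs
  · rw [norm_neg]; exact norm_le_pi_norm z i
  · exact norm_le_pi_norm z i

lemma reflL_ball (k : Fin (m + 2)) (r : ℝ) :
    reflL k '' Metric.ball 0 r = Metric.ball 0 r := by
  have h : ∀ z ∈ Metric.ball (0 : Fin (m + 2) → ℝ) r, reflL k z ∈ Metric.ball 0 r := by
    intro z hz
    rw [mem_ball_zero_iff] at hz ⊢
    exact (norm_reflL_le k z).trans_lt hz
  ext z
  constructor
  · rintro ⟨w, hw, rfl⟩; exact h w hw
  · intro hz; exact ⟨reflL k z, h z hz, reflL_reflL k z⟩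

/-- averaging. -/
noncomputable def avg (k : Fin (m + 2)) (ψ : (Fin (m + 2) → ℝ) → (Fin (m + 2) → ℝ)) :
    (Fin (m + 2) → ℝ) → (Fin (m + 2) → ℝ) :=
  fun z => (1 / 2 : ℝ) • (ψ z + reflL k (ψ (reflL k z)))

lemma avg_equiv (k : Fin (m + 2)) (ψ) (z) : avg k ψ (reflL k z) = reflL k (avg k ψ z) := by
  simp only [avg, reflL_reflL, map_smul, map_add, add_comm]

lemma avg_equiv' (k l : Fin (m + 2)) (ψ) (h : ∀ z, ψ (reflL l z) = reflL l (ψ z)) (z) :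
    avg k ψ (reflL l z) = reflL l (avg k ψ z) := by
  simp only [avg, map_smul, map_add, reflL_comm k l, h]

lemma Good.avg {X ψ : (Fin (m + 2) → ℝ) → (Fin (m + 2) → ℝ)} (h : Good X ψ) (k : Fin (m + 2))
    (hk : ∀ᶠ z in 𝓝 (0 : Fin (m + 2) → ℝ), X (reflL k z) = reflL k (X z)) :
    Good X (avg k ψ) := by
  obtain ⟨hs, h0, hd, he⟩ := h
  have hfd : ∀ z, HasFDerivAt (NambuLin.avg k ψ) ((1 / 2 : ℝ) • (fderiv ℝ ψ z +
      (reflL k).comp ((fderiv ℝ ψ (reflL k z)).comp (reflL k)))) z := fun z =>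
    ((hs.differentiable (by simp) z).hasFDerivAt.add ((reflL k).hasFDerivAt.comp z
      ((hs.differentiable (by simp) _).hasFDerivAt.comp z (reflL k).hasFDerivAt))).const_smul (1 / 2 : ℝ)
  refine ⟨?_, ?_, ?_, ?_⟩
  · exact (contDiff_const (c := (1 / 2 : ℝ))).smul (hs.add ((reflL k).contDiff.comp (hs.comp (reflL k).contDiff)))
  · simp [NambuLin.avg, h0]
  · rw [(hfd 0).fderiv, map_zero, hd]
    ext z i
    simp [reflL_reflL]
    ring
  · have ht : Tendsto (reflL k) (𝓝 0) (𝓝 0) := by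
      have := (reflL k).continuous.tendsto 0
      rwa [map_zero] at this
    filter_upwards [he, ht.eventually he, hk] with z h1 h2 h3
    rw [(hfd z).fderiv]
    simp only [NambuLin.avg, Lvf_smul, Lvf_add, Lvf_reflL]
    rw [smul_apply, add_apply, ContinuousLinearMap.comp_apply,
      ContinuousLinearMap.comp_apply, ← h3, h1, h2]

lemma good_of_flat {X Y : (Fin (m + 2) → ℝ) → (Fin (m + 2) → ℝ)} (hY : FlatC (SS m) Y)
    (hXY : ∀ᶠ z in 𝓝 (0 : Fin (m + 2) → ℝ), X z = Lvf z + Y z) : ∃ ψ, Good X ψ := by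
  have hex : ∀ i : Fin (m + 2), ∃ (c : ℝ), (∀ z, Lvf z i = c * z i) ∧
      ∃ f : (Fin (m + 2) → ℝ) → ℝ, ContDiff ℝ ∞ f ∧ f 0 = 0 ∧ fderiv ℝ f 0 = 0 ∧
      ∀ᶠ z in 𝓝 (0 : Fin (m + 2) → ℝ), fderiv ℝ f z (Lvf z + Y z) - c * f z = - Y z i := by
    intro i
    have hg : FlatC (SS m) (fun z => - Y z i) :=
      hY.clm (T := fun _ => -ContinuousLinearMap.proj (R := ℝ) (φ := fun _ : Fin (m + 2) => ℝ) i)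
        contDiff_const
    refine Fin.cases ?_ (fun i => Fin.cases ?_ (fun i => ?_) i) i (motive := fun i =>
      FlatC (SS m) (fun z => - Y z i) → ∃ (c : ℝ), (∀ z, Lvf z i = c * z i) ∧
      ∃ f : (Fin (m + 2) → ℝ) → ℝ, ContDiff ℝ ∞ f ∧ f 0 = 0 ∧ fderiv ℝ f 0 = 0 ∧
      ∀ᶠ z in 𝓝 (0 : Fin (m + 2) → ℝ), fderiv ℝ f z (Lvf z + Y z) - c * f z = - Y z i) hg
    · exact fun hg => ⟨_, fun z => by rw [Lvf_zero]; norm_num, solve Y _ hY hg 2 0 rfl⟩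
    · exact fun hg => ⟨_, fun z => by
        show Lvf z 1 = _ * z 1
        rw [Lvf_one]; norm_num, solve Y _ hY hg 0 2 rfl⟩
    · exact fun hg => ⟨_, fun z => by rw [Lvf_succ]; norm_num, solve Y _ hY hg 1 1 rfl⟩
  choose c hc f hf hf0 hfd hfe using hex
  have hd : ∀ z, HasFDerivAt (fun z i => z i + f i z)
      (ContinuousLinearMap.pi fun i => ContinuousLinearMap.proj i + fderiv ℝ (f i) z) z := fun z =>
    hasFDerivAt_pi.2 fun i => (ContinuousLinearMap.proj (R := ℝ) (φ := fun _ : Fin (m + 2) => ℝ)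
      i).hasFDerivAt.add ((hf i).differentiable (by simp) z).hasFDerivAt
  refine ⟨fun z i => z i + f i z, ?_, ?_, ?_, ?_⟩
  · exact contDiff_pi.2 fun i => (contDiff_apply ℝ ℝ i).add (hf i)
  · ext i; simp [hf0]
  · rw [(hd 0).fderiv]
    ext z i
    simp [hfd]
  · filter_upwards [hXY, eventually_all.2 hfe] with z hz he
    rw [(hd z).fderiv]
    ext i
    have h1 := he i
    rw [hc, ContinuousLinearMap.pi_apply, add_apply,
      ContinuousLinearMap.proj_apply, hz, Pi.add_apply, hc]
    linear_combination h1

lemma exists_flatC {U : Set (Fin (m + 2) → ℝ)} (hU : IsOpen U) (h0U : (0 : Fin (m + 2) → ℝ) ∈ U)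
    {Z : (Fin (m + 2) → ℝ) → (Fin (m + 2) → ℝ)} (hZ : ContDiffOn ℝ ∞ Z U)
    (hflat : ∀ z ∈ U, z 0 = 0 → z 1 = 0 → ∀ j : ℕ, iteratedFDerivWithin ℝ j Z U z = 0) :
    ∃ Y, FlatC (SS m) Y ∧ ∀ᶠ z in 𝓝 (0 : Fin (m + 2) → ℝ), Z z = Y z := by
  obtain ⟨ε, hε, hεU⟩ := Metric.isOpen_iff.1 hU 0 h0U
  let ρ : ContDiffBump (0 : Fin (m + 2) → ℝ) := ⟨ε / 4, ε / 2, by positivity, by linarith⟩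
  have hρs : ContDiff ℝ ∞ (ρ : (Fin (m + 2) → ℝ) → ℝ) := ρ.contDiff
  have hts : tsupport ρ ⊆ U := by
    rw [ρ.tsupport_eq]
    exact (Metric.closedBall_subset_ball (by show ε / 2 < ε; linarith)).trans hεU
  have hZat : ∀ z ∈ U, ContDiffAt ℝ ∞ Z z := fun z hz => hZ.contDiffAt (hU.mem_nhds hz)
  have hYt : tsupport (fun z => ρ z • Z z) ⊆ tsupport ρ := tsupport_smul_subset_left _ _
  refine ⟨fun z => ρ z • Z z, ⟨?_, ?_, ?_⟩, ?_⟩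
  · exact contDiff_of_tsupport' fun z hz => hρs.contDiffAt.smul (hZat z (hts (hYt hz)))
  · exact ρ.hasCompactSupport.smul_right
  · intro z hz j
    by_cases hzU : z ∈ U
    · have h1 := norm_iteratedFDerivWithin_smul_le (𝕜 := ℝ) hρs.contDiffOn hZ hU.uniqueDiffOn hzU
        (n := j) (by exact_mod_cast le_top)
      rw [← norm_le_zero_iff, ← iteratedFDerivWithin_of_isOpen j hU hzU]
      refine h1.trans (le_of_eq (Finset.sum_eq_zero fun i _ => ?_))
      rw [hflat z hzU hz.1 hz.2, norm_zero, mul_zero]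
    · have h2 : z ∉ tsupport (fun z => ρ z • Z z) := fun h => hzU (hts (hYt h))
      by_contra h3
      exact h2 (support_iteratedFDeriv_subset (𝕜 := ℝ) j h3)
  · filter_upwards [ρ.eventuallyEq_one] with z hz
    rw [hz]; simp

lemma good_diffeo {X ψ : (Fin (m + 2) → ℝ) → (Fin (m + 2) → ℝ)} (h : Good X ψ)
    {U : Set (Fin (m + 2) → ℝ)} (hU : IsOpen U) (h0U : (0 : Fin (m + 2) → ℝ) ∈ U) :
    ∃ r > 0, Metric.ball 0 r ⊆ U ∧ IsSmoothDiffeoOn ψ (Metric.ball 0 r) ∧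
      ∀ z ∈ Metric.ball 0 r, fderiv ℝ ψ z (X z) = Lvf (ψ z) := by
  obtain ⟨hs, h0, hd, he⟩ := h
  have hd' : HasFDerivAt ψ ((ContinuousLinearEquiv.refl ℝ (Fin (m + 2) → ℝ) :
      (Fin (m + 2) → ℝ) ≃L[ℝ] (Fin (m + 2) → ℝ)) : _ →L[ℝ] _) 0 := by
    have := (hs.differentiable (by simp) 0).hasFDerivAt
    rwa [hd] at this
  have hat : ContDiffAt ℝ ∞ ψ 0 := hs.contDiffAt
  let e := hat.toOpenPartialHomeomorph ψ hd' (by simp)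
  have hecoe : (e : (Fin (m + 2) → ℝ) → _) = ψ := rfl
  have hsrc : e.source ∈ 𝓝 (0 : Fin (m + 2) → ℝ) :=
    e.open_source.mem_nhds (hat.mem_toOpenPartialHomeomorph_source hd' (by simp))
  have hcl : ∀ᶠ z in 𝓝 (0 : Fin (m + 2) → ℝ), fderiv ℝ ψ z ∈
      range ((↑) : ((Fin (m + 2) → ℝ) ≃L[ℝ] (Fin (m + 2) → ℝ)) → _ →L[ℝ] _) := by
    have hc : ContinuousAt (fderiv ℝ ψ) 0 := (hs.continuous_fderiv (by simp)).continuousAt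
    refine hc ?_
    rw [hd]
    exact ContinuousLinearEquiv.nhds (ContinuousLinearEquiv.refl ℝ _)
  obtain ⟨r, hr, hrs⟩ := Metric.mem_nhds_iff.1
    (inter_mem (inter_mem (hU.mem_nhds h0U) hsrc) (inter_mem he hcl))
  have hsub : Metric.ball 0 r ⊆ e.source := fun z hz => (hrs hz).1.2
  refine ⟨r, hr, fun z hz => (hrs hz).1.1, ⟨Metric.isOpen_ball, ?_, hs.contDiffOn, e.symm, ?_, ?_, ?_⟩,
    fun z hz => (hrs hz).2.1⟩
  · exact e.isOpen_image_of_subset_source Metric.isOpen_ball hsub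
  · rintro _ ⟨z, hz, rfl⟩
    obtain ⟨A, hA⟩ := (hrs hz).2.2
    have hz' : e.symm (ψ z) = z := e.left_inv (hsub hz)
    have h1 : HasFDerivAt ψ (A : _ →L[ℝ] _) (e.symm (ψ z)) := by
      rw [hz', hA]; exact (hs.differentiable (by simp) z).hasFDerivAt
    exact (e.contDiffAt_symm (e.map_source (hsub hz)) h1 hs.contDiffAt).contDiffWithinAt
  · exact fun z hz => e.left_inv (hsub hz)
  · rintro _ ⟨z, hz, rfl⟩
    exact congrArg ψ (e.left_inv (hsub hz))

lemma Lvf_contDiff : ContDiff ℝ ∞ (Lvf : (Fin (m + 2) → ℝ) → _) := by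
  refine contDiff_pi.2 fun i => ?_
  unfold Lvf
  split_ifs
  · exact contDiff_apply ℝ ℝ 0
  · exact (contDiff_apply ℝ ℝ 1).neg
  · exact contDiff_const

end FinalPart

/-- Lemma 2.2 of the paper, a special case of a theorem of
Belitskii–Kopanskii. A smooth vector field on a neighborhood of `0` in `ℝ^{m+2}`
which vanishes on `Σ = {z₁ = z₂ = 0}`, is `σ`- and `δ`-equivariant, and equals the
hyperbolic linear vector field `L(z) = z₁e₁ − z₂e₂` up to a term flat along `Σ`,
is locally smoothly linearizable at `0` in a `σ`- and `δ`-equivariant way. -/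
theorem equivariant_vector_field_linearization (m : ℕ)
    (U : Set (Fin (m + 2) → ℝ)) (hU : IsOpen U) (h0U : (0 : Fin (m + 2) → ℝ) ∈ U)
    (hUsig : sig '' U = U) (hUdel : del '' U = U)
    (X : (Fin (m + 2) → ℝ) → (Fin (m + 2) → ℝ)) (hX : ContDiffOn ℝ ∞ X U)
    (hvanish : ∀ z ∈ U, z 0 = 0 → z 1 = 0 → X z = 0)
    (hsig : ∀ z ∈ U, X (sig z) = sig (X z))
    (hdel : ∀ z ∈ U, X (del z) = del (X z))
    (hflat : ∀ z ∈ U, z 0 = 0 → z 1 = 0 →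
      ∀ j : ℕ, iteratedFDerivWithin ℝ j (fun w => X w - Lvf w) U z = 0) :
    ∃ W : Set (Fin (m + 2) → ℝ), W ⊆ U ∧ (0 : Fin (m + 2) → ℝ) ∈ W ∧
      sig '' W = W ∧ del '' W = W ∧
      ∃ ψ : (Fin (m + 2) → ℝ) → (Fin (m + 2) → ℝ), IsSmoothDiffeoOn ψ W ∧ ψ 0 = 0 ∧
        (∀ z ∈ W, ψ (sig z) = sig (ψ z)) ∧ (∀ z ∈ W, ψ (del z) = del (ψ z)) ∧
        ∀ z ∈ W, fderiv ℝ ψ z (X z) = Lvf (ψ z) := by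
  obtain ⟨Y, hY, hXY⟩ := exists_flatC hU h0U (hX.sub Lvf_contDiff.contDiffOn) hflat
  obtain ⟨ψ₀, hψ₀⟩ := good_of_flat (X := X) hY (hXY.mono fun z hz => by rw [← hz]; abel)
  rw [sig_eq] at hsig ⊢
  rw [del_eq] at hdel ⊢
  have h1 := hψ₀.avg 0 (Filter.mem_of_superset (hU.mem_nhds h0U) hsig)
  have h2 := h1.avg 1 (Filter.mem_of_superset (hU.mem_nhds h0U) hdel)
  obtain ⟨r, hr, hrU, hdiff, hpde⟩ := good_diffeo h2 hU h0U
  exact ⟨Metric.ball 0 r, hrU, Metric.mem_ball_self hr, reflL_ball 0 r, reflL_ball 1 r,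
    _, hdiff, h2.2.1, fun z _ => avg_equiv' 1 0 _ (avg_equiv 0 ψ₀) z,
    fun z _ => avg_equiv 1 _ z, hpde⟩



end NambuLin
end

section
/- Let m ≥ 0 and let F : ℝ × ℝᵐ → ℝ be a C^∞ function which is even in its first variable: F(−t, u) = F(t, u) for all t ∈ ℝ and u ∈ ℝᵐ. Then there exists a C^∞ function G : ℝ × ℝᵐ → ℝ such that F(t, u) = G(t², u) for all (t, u) ∈ ℝ × ℝᵐ. -/
open scoped ContDiff

theorem we_param {E : Type} [NormedAddCommGroup E] [NormedSpace ℝ E] [ProperSpace E] (n : ℕ) :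
    ∀ {F : Type} [NormedAddCommGroup F] [NormedSpace ℝ F] [CompleteSpace F] (f : E × ℝ → F),
      ContDiff ℝ ∞ f → ContDiff ℝ n (fun x => ∫ τ in (0:ℝ)..1, f (x, τ)) := by
  induction n with
  | zero =>
    intro F _ _ _ f hf
    refine contDiff_zero.2 ?_
    exact intervalIntegral.continuous_parametric_intervalIntegral_of_continuous'
      (f := fun x τ => f (x, τ)) (by simpa [Function.uncurry_def] using hf.continuous) 0 1
  | succ n ih =>
    intro F _ _ _ f hf
    have hf' : ContDiff ℝ ∞ (fun p => (fderiv ℝ f p).comp (ContinuousLinearMap.inl ℝ E ℝ)) :=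
      (hf.fderiv_right (m := ∞) (by simp)).clm_comp contDiff_const
    refine contDiff_succ_iff_hasFDerivAt.2 ⟨_, ih _ hf', fun x => ?_⟩
    obtain ⟨C, hC⟩ := ((isCompact_closedBall x 1).prod (isCompact_Icc (a := (0:ℝ)) (b := 1))).exists_bound_of_continuousOn
      hf'.continuous.continuousOn
    refine intervalIntegral.hasFDerivAt_integral_of_dominated_of_fderiv_le
      (F := fun x τ => f (x, τ)) (bound := fun _ => C)
      (F' := fun x τ => (fderiv ℝ f (x, τ)).comp (ContinuousLinearMap.inl ℝ E ℝ))
      (Metric.closedBall_mem_nhds x one_pos) ?_ ?_ ?_ ?_ ?_ ?_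
    · refine Filter.Eventually.of_forall fun y => Continuous.aestronglyMeasurable ?_
      exact hf.continuous.comp (by fun_prop)
    · exact Continuous.intervalIntegrable (hf.continuous.comp (by fun_prop)) _ _
    · exact Continuous.aestronglyMeasurable (hf'.continuous.comp (by fun_prop : Continuous fun τ : ℝ => (x, τ)))
    · refine Filter.Eventually.of_forall fun τ hτ y hy => hC (y, τ) ⟨hy, ?_⟩
      rw [Set.uIoc_of_le zero_le_one] at hτ
      exact ⟨hτ.1.le, hτ.2⟩
    · exact intervalIntegrable_const
    · refine Filter.Eventually.of_forall fun τ hτ y hy => ?_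
      have h1 : HasFDerivAt f (fderiv ℝ f (y, τ)) (y, τ) :=
        ((hf.differentiable (by simp)) (y, τ)).hasFDerivAt
      have h2 : HasFDerivAt (fun y : E => (y, τ)) (ContinuousLinearMap.inl ℝ E ℝ) y :=
        hasFDerivAt_prodMk_left y τ
      exact h1.comp y h2

theorem we_hadamard {V : Type} [NormedAddCommGroup V] [NormedSpace ℝ V] [ProperSpace V]
    (R : ℝ × V → ℝ) (hR : ContDiff ℝ ∞ R) (h0 : ∀ u, R (0, u) = 0) :
    ∃ Q : ℝ × V → ℝ, ContDiff ℝ ∞ Q ∧ ∀ t u, R (t, u) = t * Q (t, u) := by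
  have hR' := hR.fderiv_right (m := ∞) (by simp)
  refine ⟨fun x => ∫ τ in (0:ℝ)..1, (fun q : (ℝ × V) × ℝ =>
    fderiv ℝ R (q.2 * q.1.1, q.1.2) (1, 0)) (x, τ), ?_, ?_⟩
  · refine contDiff_infty.2 fun n => we_param n (fun q : (ℝ × V) × ℝ =>
      fderiv ℝ R (q.2 * q.1.1, q.1.2) (1, 0)) ?_
    exact (hR'.comp (by fun_prop : ContDiff ℝ ∞ fun q : (ℝ × V) × ℝ => (q.2 * q.1.1, q.1.2))).clm_apply
      contDiff_const
  · intro t u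
    have hd : ∀ τ : ℝ, HasDerivAt (fun τ : ℝ => R (τ * t, u)) (t * fderiv ℝ R (τ * t, u) (1, 0)) τ := by
      intro τ
      have h1 : HasFDerivAt R (fderiv ℝ R (τ * t, u)) (τ * t, u) :=
        ((hR.differentiable (by simp)) _).hasFDerivAt
      have h2 : HasDerivAt (fun τ : ℝ => (τ * t, u)) (1 * t, (0 : V)) τ :=
        ((hasDerivAt_id τ).mul_const t).prodMk (hasDerivAt_const τ u)
      have h3 := h1.comp_hasDerivAt τ h2
      rw [show ((1 * t, (0:V)) : ℝ × V) = t • ((1:ℝ), (0:V)) by simp, map_smul, smul_eq_mul] at h3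
      exact h3
    have hc : Continuous fun τ : ℝ => fderiv ℝ R (τ * t, u) (1, 0) :=
      (hR'.continuous.comp (by fun_prop : Continuous fun τ : ℝ => (τ * t, u))).clm_apply continuous_const
    have := intervalIntegral.integral_eq_sub_of_hasDerivAt (a := 0) (b := 1) (fun τ _ => hd τ)
      ((continuous_const.mul hc).intervalIntegrable _ _)
    rw [intervalIntegral.integral_const_mul] at this
    simp [h0] at this
    simp [this]

theorem we_cancel {V : Type} [NormedAddCommGroup V] [NormedSpace ℝ V]
    (P Q : ℝ × V → ℝ) (hP : Continuous P) (hQ : Continuous Q)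
    (h : ∀ t u, t ≠ 0 → P (t, u) = Q (t, u)) : ∀ t u, P (t, u) = Q (t, u) := by
  intro t u
  have := Continuous.ext_on (f := fun t => P (t, u)) (g := fun t => Q (t, u))
    (dense_compl_singleton (0:ℝ)) (hP.comp (by fun_prop)) (hQ.comp (by fun_prop))
    (fun t ht => h t u ht)
  exact congrFun this t

theorem we_even_step {V : Type} [NormedAddCommGroup V] [NormedSpace ℝ V] [ProperSpace V]
    (F : ℝ × V → ℝ) (hF : ContDiff ℝ ∞ F) (he : ∀ t u, F (-t, u) = F (t, u)) :
    ∃ G : ℝ × V → ℝ, (ContDiff ℝ ∞ G ∧ ∀ t u, G (-t, u) = G (t, u)) ∧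
      ∀ t u, F (t, u) = F (0, u) + t ^ 2 * G (t, u) := by
  obtain ⟨Q, hQ, hFQ⟩ := we_hadamard (fun p => F p - F (0, p.2))
    (hF.sub (hF.comp (by fun_prop))) (by simp)
  have hodd : ∀ t u, Q (-t, u) = - Q (t, u) := by
    refine we_cancel (fun p => Q (-p.1, p.2)) (fun p => - Q p)
      (hQ.continuous.comp (by fun_prop)) hQ.continuous.neg ?_
    intro t u ht
    have h1 := hFQ t u
    have h2 := hFQ (-t) u
    simp only [he] at h1 h2
    have : t * (Q (-t, u) + Q (t, u)) = 0 := by linarith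
    have := (mul_eq_zero.1 this).resolve_left ht
    simp only; linarith
  obtain ⟨G, hG, hQG⟩ := we_hadamard Q hQ (fun u => by have := hodd 0 u; simp at this; linarith)
  refine ⟨G, ⟨hG, ?_⟩, ?_⟩
  · refine we_cancel (fun p => G (-p.1, p.2)) G (hG.continuous.comp (by fun_prop)) hG.continuous ?_
    intro t u ht
    have h1 := hodd t u
    rw [hQG, hQG] at h1
    have : t * (G (-t, u) - G (t, u)) = 0 := by linarith
    have := (mul_eq_zero.1 this).resolve_left ht
    simp only; linarith
  · intro t u
    have := hFQ t u
    simp only [hQG] at this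
    linarith

theorem we_even_expand {V : Type} [NormedAddCommGroup V] [NormedSpace ℝ V] [ProperSpace V]
    (F : ℝ × V → ℝ) (hF : ContDiff ℝ ∞ F) (he : ∀ t u, F (-t, u) = F (t, u)) :
    ∃ a : ℕ → V → ℝ, (∀ k, ContDiff ℝ ∞ (a k)) ∧ ∀ N, ∃ G : ℝ × V → ℝ, ContDiff ℝ ∞ G ∧
      ∀ t u, F (t, u) = ∑ k ∈ Finset.range N, a k u * (t ^ 2) ^ k + (t ^ 2) ^ N * G (t, u) := by
  let S := {F : ℝ × V → ℝ // ContDiff ℝ ∞ F ∧ ∀ t u, F (-t, u) = F (t, u)}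
  have hstep : ∀ F : S, ∃ G : S, ∀ t u, F.1 (t, u) = F.1 (0, u) + t ^ 2 * G.1 (t, u) := by
    rintro ⟨F, hF, he⟩
    obtain ⟨G, hG, h⟩ := we_even_step F hF he
    exact ⟨⟨G, hG⟩, h⟩
  choose D hD using hstep
  let f : ℕ → S := fun k => D^[k] ⟨F, hF, he⟩
  have hf : ∀ k, f (k + 1) = D (f k) := fun k => Function.iterate_succ_apply' _ _ _
  refine ⟨fun k u => (f k).1 (0, u), fun k => (f k).2.1.comp (by fun_prop), fun N =>
    ⟨(f N).1, (f N).2.1, ?_⟩⟩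
  intro t u
  induction N with
  | zero => simp [f]
  | succ N ih =>
    rw [ih, Finset.sum_range_succ, hD (f N) t u, hf]
    ring

theorem we_eta (N : ℕ) (χ : ContDiffBump (0:ℝ)) (l : ℝ) :
    ∃ η : ℝ → ℝ, ContDiff ℝ ∞ η ∧ ∀ s, χ (l * s) = 1 + s ^ N * η s := by
  refine ⟨fun s => (χ (l * s) - 1) / s ^ N, ?_, ?_⟩
  · refine contDiff_iff_contDiffAt.2 fun s => ?_
    have hc : ContDiff ℝ ∞ fun s => χ (l * s) - 1 := (χ.contDiff.comp (by fun_prop)).sub contDiff_const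
    by_cases hs : s = 0
    · subst hs
      refine (contDiffAt_const (c := (0:ℝ))).congr_of_eventuallyEq ?_
      have h1 : ∀ᶠ x in nhds (0:ℝ), χ x = 1 := χ.eventuallyEq_one
      have h2 : Filter.Tendsto (fun s : ℝ => l * s) (nhds 0) (nhds 0) := by
        have : Continuous fun s : ℝ => l * s := by fun_prop
        simpa using this.tendsto 0
      filter_upwards [h2.eventually h1] with x hx
      simp [hx]
    · exact hc.contDiffAt.div (by fun_prop) (pow_ne_zero _ hs)
  · intro s
    by_cases hs : s = 0
    · subst hs
      have : χ (0:ℝ) = 1 := χ.eventuallyEq_one.self_of_nhds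
      simp [this]
    · field_simp
      ring

def WeFlat {V F : Type} [NormedAddCommGroup V] [NormedSpace ℝ V] [NormedAddCommGroup F]
    [NormedSpace ℝ F] (R : ℝ × V → F) : Prop :=
  ∀ n : ℕ, ∃ Q : ℝ × V → F, ContDiff ℝ ∞ Q ∧ ∀ p, R p = p.1 ^ (n + 1) • Q p

noncomputable def weL (V : Type) [NormedAddCommGroup V] [NormedSpace ℝ V] (c d : ℝ) :
    ℝ × V →L[ℝ] ℝ × V :=
  c • (ContinuousLinearMap.inl ℝ ℝ V).comp (ContinuousLinearMap.fst ℝ ℝ V) +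
  d • (ContinuousLinearMap.inr ℝ ℝ V).comp (ContinuousLinearMap.snd ℝ ℝ V)

noncomputable def weT {V F : Type} [NormedAddCommGroup V] [NormedSpace ℝ V] [NormedAddCommGroup F]
    [NormedSpace ℝ F] (R : ℝ × V → F) (p : ℝ × V) : ℝ × V →L[ℝ] F :=
  (fderiv ℝ R p).comp (weL V (2 * p.1)⁻¹ 1)

theorem we_flat_T {V F : Type} [NormedAddCommGroup V] [NormedSpace ℝ V] [NormedAddCommGroup F]
    [NormedSpace ℝ F] (R : ℝ × V → F) (h : WeFlat R) : WeFlat (weT R) := by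
  intro n
  obtain ⟨Q, hQ, hR⟩ := h (n + 2)
  have hRe : R = fun p => p.1 ^ (n + 3) • Q p := funext hR
  let Q2 : ℝ × V → (ℝ × V →L[ℝ] F) := fun p =>
    p.1 • fderiv ℝ Q p + ((n:ℝ) + 3) • (ContinuousLinearMap.fst ℝ ℝ V).smulRight (Q p)
  have hd : ∀ p, fderiv ℝ R p = p.1 ^ (n + 2) • Q2 p := by
    intro p
    have h1 : HasFDerivAt Q (fderiv ℝ Q p) p := ((hQ.differentiable (by simp)) p).hasFDerivAt
    have h2 : HasFDerivAt (fun p : ℝ × V => p.1 ^ (n + 3))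
        ((((n + 3 : ℕ) : ℝ) * p.1 ^ (n + 2)) • ContinuousLinearMap.fst ℝ ℝ V) p :=
      (hasDerivAt_pow (n + 3) p.1).comp_hasFDerivAt p hasFDerivAt_fst
    have h3 := (h2.smul h1).fderiv
    rw [hRe]
    refine h3.trans ?_
    ext v
    · simp [Q2, smul_smul, pow_succ]
      module
    · simp [Q2, smul_smul, pow_succ]
  have hQ2 : ContDiff ℝ ∞ Q2 := by
    have h1 := hQ.fderiv_right (m := ∞) (by simp)
    have h2 : ContDiff ℝ ∞ fun p => (ContinuousLinearMap.fst ℝ ℝ V).smulRight (Q p) :=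
      contDiff_const.smulRight hQ
    exact (contDiff_fst.smul h1).add (h2.const_smul _)
  refine ⟨fun p => (Q2 p).comp (weL V (1/2) p.1), hQ2.clm_comp ?_, fun p => ?_⟩
  · unfold weL
    exact contDiff_const.add (contDiff_fst.smul contDiff_const)
  · unfold weT
    rw [hd]
    by_cases hp : p.1 = 0
    · simp [hp]
    · beta_reduce
      have : weL V (1/2) p.1 = p.1 • weL V (2 * p.1)⁻¹ 1 := by
        unfold weL
        rw [smul_add, smul_smul, smul_smul]
        congr 2
        · field_simp
        · simp
      rw [this, ContinuousLinearMap.comp_smul, smul_smul, ContinuousLinearMap.smul_comp]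
      congr 1

theorem we_lift_deriv {V F : Type} [NormedAddCommGroup V] [NormedSpace ℝ V] [NormedAddCommGroup F]
    [NormedSpace ℝ F] (R : ℝ × V → F) (h : WeFlat R) (x : ℝ × V) :
    HasFDerivAt (fun x : ℝ × V => R (√x.1, x.2)) (weT R (√x.1, x.2)) x := by
  by_cases hx : 0 < x.1
  · have hR : DifferentiableAt ℝ R (√x.1, x.2) := by
      obtain ⟨Q, hQ, hR⟩ := h 0
      rw [funext hR]
      exact ((contDiff_fst.pow _).smul hQ).differentiable (by simp) _
    have h1 : HasFDerivAt (fun x : ℝ × V => √x.1)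
        ((1 / (2 * √x.1)) • ContinuousLinearMap.fst ℝ ℝ V) x :=
      (Real.hasDerivAt_sqrt hx.ne').comp_hasFDerivAt x hasFDerivAt_fst
    have h2 := hR.hasFDerivAt.comp x (h1.prodMk hasFDerivAt_snd)
    have h3 : weT R (√x.1, x.2) = (fderiv ℝ R (√x.1, x.2)).comp
        (((1 / (2 * √x.1)) • ContinuousLinearMap.fst ℝ ℝ V).prod (ContinuousLinearMap.snd ℝ ℝ V)) := by
      unfold weT
      congr 1
      unfold weL
      ext v <;> simp
    rw [h3]
    exact h2
  · have hx : x.1 ≤ 0 := not_lt.1 hx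
    have h0 : weT R (√x.1, x.2) = 0 := by
      obtain ⟨Q, hQ, hR⟩ := we_flat_T R h 0
      rw [hR]; simp [Real.sqrt_eq_zero_of_nonpos hx]
    rw [h0]
    obtain ⟨Q, hQ, hR⟩ := h 3
    have hRx : R (√x.1, x.2) = 0 := by rw [hR]; simp [Real.sqrt_eq_zero_of_nonpos hx]
    refine .of_isLittleO ?_
    simp only [hRx, zero_apply, sub_zero]
    have hcont : Continuous fun y : ℝ × V => |y.1 - x.1| * ‖Q (√y.1, y.2)‖ :=
      (by fun_prop : Continuous fun y : ℝ × V => |y.1 - x.1|).mul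
        (hQ.continuous.comp (by fun_prop)).norm
    have ht : Filter.Tendsto (fun y : ℝ × V => |y.1 - x.1| * ‖Q (√y.1, y.2)‖) (nhds x) (nhds 0) := by
      simpa using hcont.tendsto x
    refine Asymptotics.isLittleO_iff.2 fun c hc => ?_
    filter_upwards [ht.eventually (gt_mem_nhds hc)] with y hy
    rw [hR, norm_smul]
    have h1 : ‖√y.1 ^ (3 + 1)‖ ≤ |y.1 - x.1| * |y.1 - x.1| := by
      rcases le_total y.1 0 with h | h
      · rw [Real.sqrt_eq_zero_of_nonpos h]; simpa using mul_self_nonneg (y.1 - x.1)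
      · rw [show √y.1 ^ (3 + 1) = (√y.1 ^ 2) ^ 2 by ring, Real.sq_sqrt h, abs_of_nonneg (by linarith)]
        rw [Real.norm_of_nonneg (by positivity)]
        nlinarith
    have h2 : |y.1 - x.1| ≤ ‖y - x‖ := norm_fst_le (y - x)
    calc ‖√y.1 ^ (3 + 1)‖ * ‖Q (√y.1, y.2)‖
        ≤ (|y.1 - x.1| * |y.1 - x.1|) * ‖Q (√y.1, y.2)‖ := by gcongr
      _ = (|y.1 - x.1| * ‖Q (√y.1, y.2)‖) * |y.1 - x.1| := by ring
      _ ≤ c * ‖y - x‖ := by gcongr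

theorem we_lift {V : Type} [NormedAddCommGroup V] [NormedSpace ℝ V] (n : ℕ) :
    ∀ {F : Type} [NormedAddCommGroup F] [NormedSpace ℝ F] (R : ℝ × V → F), WeFlat R →
      ContDiff ℝ n (fun x : ℝ × V => R (√x.1, x.2)) := by
  induction n with
  | zero =>
    intro F _ _ R h
    obtain ⟨Q, hQ, hR⟩ := h 0
    rw [funext hR]
    exact contDiff_zero.2 (((contDiff_fst.pow _).smul hQ).continuous.comp (by fun_prop))
  | succ n ih =>
    intro F _ _ R h
    exact contDiff_succ_iff_hasFDerivAt.2 ⟨_, ih _ (we_flat_T R h), we_lift_deriv R h⟩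

theorem we_scale {V : Type} [NormedAddCommGroup V] [NormedSpace ℝ V]
    (θ : ℝ × V → ℝ) (hθ : ContDiff ℝ ∞ θ) (i : ℕ) (M : ℝ) (hM : ∀ p, ‖iteratedFDeriv ℝ i θ p‖ ≤ M)
    (l : ℝ) (hl : 1 ≤ l) (p : ℝ × V) :
    ‖iteratedFDeriv ℝ i (fun p : ℝ × V => θ (l * p.1, p.2)) p‖ ≤ M * l ^ i := by
  let g : ℝ × V →L[ℝ] ℝ × V :=
    (l • ContinuousLinearMap.fst ℝ ℝ V).prod (ContinuousLinearMap.snd ℝ ℝ V)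
  have hg : ‖g‖ ≤ l := by
    refine ContinuousLinearMap.opNorm_le_bound _ (by linarith) fun x => ?_
    have h1 := norm_fst_le x
    have h2 := norm_snd_le x
    rw [Prod.norm_def]
    refine max_le ?_ ?_
    · simp only [g, ContinuousLinearMap.prod_apply, smul_apply,
        ContinuousLinearMap.coe_fst', norm_smul]
      rw [Real.norm_of_nonneg (by linarith)]
      gcongr
    · simp only [g, ContinuousLinearMap.prod_apply, ContinuousLinearMap.coe_snd']
      nlinarith [norm_nonneg x]
  have h := g.iteratedFDeriv_comp_right (hθ.of_le (m := (i:WithTop ℕ∞)) (by exact_mod_cast le_top)) p (i := i) le_rfl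
  have he : (fun p : ℝ × V => θ (l * p.1, p.2)) = θ ∘ g := by
    ext p; simp [g]
  rw [he, h]
  refine (ContinuousMultilinearMap.norm_compContinuousLinearMap_le _ _).trans ?_
  have hM0 : 0 ≤ M := (norm_nonneg _).trans (hM p)
  simp only [Finset.prod_const, Finset.card_univ, Fintype.card_fin]
  gcongr
  exact hM _

theorem we_borel {V : Type} [NormedAddCommGroup V] [NormedSpace ℝ V]
    (a : ℕ → V → ℝ) (ha : ∀ k, ContDiff ℝ ∞ (a k)) (hs : ∀ k, HasCompactSupport (a k)) :
    ∃ B : ℝ × V → ℝ, ContDiff ℝ ∞ B ∧ ∀ N, ∃ C : ℝ × V → ℝ, ContDiff ℝ ∞ C ∧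
      ∀ s u, B (s, u) = ∑ k ∈ Finset.range N, a k u * s ^ k + s ^ N * C (s, u) := by
  let χ : ContDiffBump (0:ℝ) := ⟨1, 2, one_pos, one_lt_two⟩
  let Θ : ℕ → ℕ → ℝ × V → ℝ := fun j k p => (p.1 ^ j * χ p.1) * a k p.2
  have hΘ : ∀ j k, ContDiff ℝ ∞ (Θ j k) := fun j k =>
    ((contDiff_fst.pow j).mul (χ.contDiff.comp contDiff_fst)).mul ((ha k).comp contDiff_snd)
  have hΘs : ∀ j k, HasCompactSupport (Θ j k) := by
    intro j k
    refine HasCompactSupport.intro (χ.hasCompactSupport.prod (hs k)) ?_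
    intro p hp
    by_contra hne
    refine hp ⟨subset_tsupport _ ?_, subset_tsupport _ ?_⟩
    · intro h; exact hne (by simp only [Θ, h]; ring)
    · intro h; exact hne (by simp only [Θ, h]; ring)
  have hM : ∀ i j k, ∃ M : ℝ, ∀ p, ‖iteratedFDeriv ℝ i (Θ j k) p‖ ≤ M := by
    intro i j k
    exact ((hΘs j k).iteratedFDeriv i).exists_bound_of_continuous
      ((hΘ j k).continuous_iteratedFDeriv (by exact_mod_cast le_top))
  choose M hM using hM
  have hM0 : ∀ i j k, 0 ≤ M i j k := fun i j k => (norm_nonneg _).trans (hM i j k 0)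
  let Λ : ℕ → ℝ := fun k =>
    1 + 2 ^ k * ∑ i ∈ Finset.range (k + 1), ∑ j ∈ Finset.range (k + 1), M i j k
  have hΛ1 : ∀ k, 1 ≤ Λ k := fun k => by
    have : 0 ≤ 2 ^ k * ∑ i ∈ Finset.range (k + 1), ∑ j ∈ Finset.range (k + 1), M i j k :=
      mul_nonneg (by positivity) (Finset.sum_nonneg fun i _ => Finset.sum_nonneg fun j _ => hM0 i j k)
    simp only [Λ]; linarith
  have hΛM : ∀ i j k, i ≤ k → j ≤ k → 2 ^ k * M i j k ≤ Λ k := by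
    intro i j k hi hj
    have h1 : M i j k ≤ ∑ j ∈ Finset.range (k + 1), M i j k :=
      Finset.single_le_sum (f := fun j => M i j k) (fun j _ => hM0 i j k)
        (Finset.mem_range.2 (by omega))
    have h2 : ∑ j ∈ Finset.range (k + 1), M i j k ≤
        ∑ i ∈ Finset.range (k + 1), ∑ j ∈ Finset.range (k + 1), M i j k :=
      Finset.single_le_sum (f := fun i => ∑ j ∈ Finset.range (k + 1), M i j k)
        (fun i _ => Finset.sum_nonneg fun j _ => hM0 i j k) (Finset.mem_range.2 (by omega))
    have h3 : (2:ℝ) ^ k * M i j k ≤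
      2 ^ k * ∑ i ∈ Finset.range (k + 1), ∑ j ∈ Finset.range (k + 1), M i j k := by
      gcongr; exact h1.trans h2
    simp only [Λ]; linarith
  let T : ℕ → ℕ → ℝ × V → ℝ := fun N k p => (p.1 ^ k * χ (Λ (k + N) * p.1)) * a (k + N) p.2
  have hT : ∀ N k, ContDiff ℝ ∞ (T N k) := fun N k =>
    ((contDiff_fst.pow k).mul (χ.contDiff.comp (by fun_prop))).mul ((ha _).comp contDiff_snd)
  have hbound : ∀ N k i, i < k → ∀ p, ‖iteratedFDeriv ℝ i (T N k) p‖ ≤ (1/2:ℝ) ^ k := by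
    intro N k i hik p
    have hL := hΛ1 (k + N)
    have hL0 : Λ (k + N) ≠ 0 := by linarith
    have he : T N k = ((Λ (k + N)) ^ k)⁻¹ • fun p : ℝ × V => Θ k (k + N) (Λ (k + N) * p.1, p.2) := by
      ext p
      simp only [T, Θ, Pi.smul_apply, smul_eq_mul, mul_pow]
      field_simp
    have hc : ContDiff ℝ ∞ fun p : ℝ × V => Θ k (k + N) (Λ (k + N) * p.1, p.2) :=
      (hΘ _ _).comp (by fun_prop)
    have h1 := we_scale (Θ k (k + N)) (hΘ _ _) i _ (hM i k (k + N)) _ hL p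
    rw [he, iteratedFDeriv_const_smul_apply (hc.contDiffAt.of_le (by exact_mod_cast le_top)), norm_smul]
    have h2 := hΛM i k (k + N) (by omega) (by omega)
    have hLk : 0 < Λ (k + N) ^ k := by positivity
    rw [norm_inv, Real.norm_of_nonneg hLk.le, inv_mul_le_iff₀ hLk]
    refine h1.trans ?_
    have h3 : (2:ℝ) ^ k * M i k (k + N) ≤ Λ (k + N) := by
      refine le_trans ?_ h2
      have := hM0 i k (k + N)
      gcongr
      · norm_num
      · omega
    have h4 : M i k (k + N) ≤ Λ (k + N) * (1/2) ^ k := by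
      rw [one_div, inv_pow, ← div_eq_mul_inv, le_div_iff₀ (by positivity)]
      linarith
    calc M i k (k + N) * Λ (k + N) ^ i ≤ (Λ (k + N) * (1/2) ^ k) * Λ (k + N) ^ i := by gcongr
      _ = Λ (k + N) ^ (i + 1) * (1/2) ^ k := by ring
      _ ≤ Λ (k + N) ^ k * (1/2) ^ k := by
        gcongr
        exact hik
  have hsum : Summable fun k : ℕ => (1/2:ℝ) ^ k := summable_geometric_two
  have hS : ∀ N, ContDiff ℝ ∞ fun p => ∑' k, T N k p := by
    intro N
    refine contDiff_tsum_of_eventually (N := ⊤) (v := fun _ k => (1/2:ℝ) ^ k) (hT N) (fun _ _ => hsum) ?_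
    intro i _
    rw [Nat.cofinite_eq_atTop]
    filter_upwards [Filter.eventually_gt_atTop i] with k hk p
    exact hbound N k i hk p
  have hsm : ∀ p, Summable fun k => T 0 k p := by
    intro p
    refine Summable.of_norm_bounded_eventually hsum ?_
    rw [Nat.cofinite_eq_atTop]
    filter_upwards [Filter.eventually_gt_atTop 0] with k hk
    simpa using hbound 0 k 0 hk p
  refine ⟨fun p => ∑' k, T 0 k p, hS 0, fun N => ?_⟩
  choose η hη hχ using fun k => we_eta N χ (Λ k)
  refine ⟨fun p => ∑ k ∈ Finset.range N, a k p.2 * p.1 ^ k * η k p.1 + ∑' k, T N k p, ?_, ?_⟩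
  · refine ContDiff.add (ContDiff.sum fun k _ => ?_) (hS N)
    exact (((ha k).comp contDiff_snd).mul (contDiff_fst.pow k)).mul ((hη k).comp contDiff_fst)
  · intro s u
    simp only
    rw [← (hsm (s, u)).sum_add_tsum_nat_add N, mul_add, ← add_assoc, ← tsum_mul_left,
      Finset.mul_sum, ← Finset.sum_add_distrib]
    congr 1
    · refine Finset.sum_congr rfl fun k _ => ?_
      simp only [T, Nat.add_zero, hχ]
      ring
    · refine tsum_congr fun k => ?_
      simp only [T, Nat.add_zero]
      ring

theorem we_local {V : Type} [NormedAddCommGroup V] [NormedSpace ℝ V] [FiniteDimensional ℝ V]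
    (F : ℝ × V → ℝ) (hF : ContDiff ℝ ∞ F) (he : ∀ t u, F (-t, u) = F (t, u)) (u₀ : V) :
    ∃ G : ℝ × V → ℝ, ContDiff ℝ ∞ G ∧ ∀ u ∈ Metric.ball u₀ 1, ∀ t, F (t, u) = G (t ^ 2, u) := by
  have : ProperSpace V := FiniteDimensional.proper ℝ V
  obtain ⟨a, ha, hexp⟩ := we_even_expand F hF he
  let ψ : ContDiffBump u₀ := ⟨1, 2, one_pos, one_lt_two⟩
  have hψ : ContDiff ℝ ∞ ψ := ψ.contDiff
  obtain ⟨B, hB, hBexp⟩ := we_borel (fun k u => ψ u * a k u) (fun k => hψ.mul (ha k))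
    (fun k => ψ.hasCompactSupport.mul_right)
  let R : ℝ × V → ℝ := fun p => ψ p.2 * F p - B (p.1 ^ 2, p.2)
  have hflat : WeFlat R := by
    intro n
    obtain ⟨G, hG, h1⟩ := hexp (n + 1)
    obtain ⟨C, hC, h2⟩ := hBexp (n + 1)
    refine ⟨fun p => p.1 ^ (n + 1) * (ψ p.2 * G p - C (p.1 ^ 2, p.2)), ?_, ?_⟩
    · exact (contDiff_fst.pow _).mul (((hψ.comp contDiff_snd).mul hG).sub (hC.comp (by fun_prop)))
    · rintro ⟨t, u⟩
      simp only [R, h1 t u, h2, smul_eq_mul, mul_add, Finset.mul_sum]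
      simp only [mul_assoc]
      ring
  refine ⟨fun x => R (√x.1, x.2) + B x, (contDiff_infty.2 fun n => we_lift n R hflat).add hB, ?_⟩
  intro u hu t
  have h1 : ψ u = 1 := ψ.one_of_mem_closedBall (Metric.ball_subset_closedBall hu)
  simp only [R, h1, Real.sqrt_sq_eq_abs, sq_abs]
  rcases abs_choice t with h | h <;> rw [h] <;> simp [he]

/-- parametrized Whitney even-function theorem. A `C^∞` function
`F(t,u)` on `ℝ × ℝᵐ` which is even in `t` is of the form `F(t,u) = G(t², u)` for a
`C^∞` function `G`. -/
theorem whitney_even (m : ℕ) (F : ℝ × (Fin m → ℝ) → ℝ) (hF : ContDiff ℝ ∞ F)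
    (heven : ∀ (t : ℝ) (u : Fin m → ℝ), F (-t, u) = F (t, u)) :
    ∃ G : ℝ × (Fin m → ℝ) → ℝ, ContDiff ℝ ∞ G ∧
      ∀ (t : ℝ) (u : Fin m → ℝ), F (t, u) = G (t ^ 2, u) := by
  let S : ℝ × (Fin m → ℝ) → Set ℝ := fun x => {y : ℝ | ∀ t : ℝ, t ^ 2 = x.1 → y = F (t, x.2)}
  have h1 : ∀ x, Convex ℝ (S x) := by
    intro x y hy z hz a b _ _ hab t ht
    rw [hy t ht, hz t ht, ← add_smul, hab, one_smul]
  obtain ⟨g, hg⟩ := exists_contMDiffMap_forall_mem_convex_of_local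
    (n := ⊤) (modelWithCornersSelf ℝ (ℝ × (Fin m → ℝ))) h1 (by
      intro x
      obtain ⟨G, hG, h⟩ := we_local F hF heven x.2
      refine ⟨Prod.snd ⁻¹' Metric.ball x.2 1, ?_, G, hG.contMDiff.contMDiffOn, ?_⟩
      · exact continuous_snd.continuousAt.preimage_mem_nhds (Metric.ball_mem_nhds _ one_pos)
      · rintro ⟨s, u⟩ hy t ht
        simp only at ht
        rw [h u hy t, ht])
  exact ⟨g, g.contMDiff.contDiff, fun t u => (hg (t ^ 2, u) t rfl).symm⟩
end

section
/- Let m ≥ 0 and let F : ℝ × ℝᵐ → ℝ be a C^∞ function which is odd in its first variable: F(−t, u) = −F(t, u) for all t ∈ ℝ and u ∈ ℝᵐ. Then there exists a C^∞ function G : ℝ × ℝᵐ → ℝ such that F(t, u) = t · G(t², u) for all (t, u) ∈ ℝ × ℝᵐ. -/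
open scoped ContDiff


open Filter Topology Asymptotics

theorem wo_paramInt {X : Type} [NormedAddCommGroup X] [NormedSpace ℝ X] [FiniteDimensional ℝ X]
    (n : ℕ) : ∀ {E : Type} [NormedAddCommGroup E] [NormedSpace ℝ E] [CompleteSpace E]
    (φ : X × ℝ → E), ContDiff ℝ ∞ φ →
    ContDiff ℝ n (fun x => ∫ r in (0:ℝ)..1, φ (x, r)) := by
  have : ProperSpace X := FiniteDimensional.proper ℝ X
  induction n with
  | zero =>
    intro E _ _ _ φ hφ
    rw [Nat.cast_zero, contDiff_zero]
    have := hφ.continuous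
    exact intervalIntegral.continuous_parametric_intervalIntegral_of_continuous'
      (f := fun x r => φ (x, r)) (by fun_prop) 0 1
  | succ n ih =>
    intro E _ _ _ φ hφ
    rw [Nat.cast_add, Nat.cast_one, contDiff_succ_iff_hasFDerivAt]
    let ψ : X × ℝ → (X →L[ℝ] E) := fun p => (fderiv ℝ φ p).comp (ContinuousLinearMap.inl ℝ X ℝ)
    have hψ : ContDiff ℝ ∞ ψ := by
      have h1 : ContDiff ℝ ∞ (fderiv ℝ φ) := hφ.fderiv_right (by simp)
      exact h1.clm_comp contDiff_const
    have hφc := hφ.continuous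
    have hψc := hψ.continuous
    refine ⟨fun x => ∫ r in (0:ℝ)..1, ψ (x, r), ih ψ hψ, fun x₀ => ?_⟩
    obtain ⟨C, hC⟩ := ((isCompact_closedBall x₀ 1).prod
      (isCompact_Icc (a := (0:ℝ)) (b := 1))).exists_bound_of_continuousOn hψc.continuousOn
    refine intervalIntegral.hasFDerivAt_integral_of_dominated_of_fderiv_le
      (F := fun x r => φ (x, r)) (F' := fun x r => ψ (x, r)) (bound := fun _ => C)
      (Metric.closedBall_mem_nhds x₀ one_pos) ?_ ?_ ?_ ?_ ?_ ?_
    · refine Eventually.of_forall fun x => ?_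
      exact (by fun_prop : Continuous fun r => φ (x, r)).aestronglyMeasurable
    · exact (by fun_prop : Continuous fun r => φ (x₀, r)).intervalIntegrable _ _
    · exact (by fun_prop : Continuous fun r => ψ (x₀, r)).aestronglyMeasurable
    · refine Eventually.of_forall fun r hr x hx => hC _ ⟨hx, ?_⟩
      rw [Set.uIoc_of_le zero_le_one] at hr
      exact ⟨hr.1.le, hr.2⟩
    · exact intervalIntegrable_const
    · refine Eventually.of_forall fun r hr x hx => ?_
      have h1 : HasFDerivAt φ (fderiv ℝ φ (x, r)) (x, r) :=
        (hφ.differentiable (by simp)).differentiableAt.hasFDerivAt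
      exact h1.comp x (hasFDerivAt_prodMk_left x r)

section
variable {V : Type} [NormedAddCommGroup V] [NormedSpace ℝ V]

theorem wo_hadamard [FiniteDimensional ℝ V] {E : Type} [NormedAddCommGroup E] [NormedSpace ℝ E]
    [CompleteSpace E]
    (f : ℝ × V → E) (hf : ContDiff ℝ ∞ f) (h0 : ∀ u, f (0, u) = 0) :
    ∃ g : ℝ × V → E, ContDiff ℝ ∞ g ∧ ∀ t u, f (t, u) = t • g (t, u) := by
  let φ : (ℝ × V) × ℝ → E := fun p => fderiv ℝ f (p.2 * p.1.1, p.1.2) (1, 0)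
  have h1 : ContDiff ℝ ∞ (fderiv ℝ f) := hf.fderiv_right (by simp)
  have hφ : ContDiff ℝ ∞ φ := by
    refine ContDiff.clm_apply (h1.comp ?_) contDiff_const
    fun_prop
  refine ⟨fun x => ∫ r in (0:ℝ)..1, φ (x, r), contDiff_infty.2 fun n => wo_paramInt n φ hφ, ?_⟩
  intro t u
  have hd : ∀ r ∈ Set.uIcc (0:ℝ) 1, HasDerivAt (fun r : ℝ => f (r * t, u)) (t • φ ((t, u), r)) r := by
    intro r _
    have h2 : HasFDerivAt f (fderiv ℝ f (r * t, u)) (r * t, u) :=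
      (hf.differentiable (by simp)).differentiableAt.hasFDerivAt
    have h3 : HasDerivAt (fun r : ℝ => (r * t, u)) (t, 0) r := by
      have := (hasDerivAt_mul_const (x := r) t)
      exact this.prodMk (hasDerivAt_const r u)
    have := h2.comp_hasDerivAt r h3
    have e : ((t, 0) : ℝ × V) = t • (1, 0) := by simp
    rw [e, map_smul] at this
    exact this
  have hc := hφ.continuous
  have := intervalIntegral.integral_eq_sub_of_hasDerivAt hd
    ((by fun_prop : Continuous fun r => t • φ ((t, u), r)).intervalIntegrable _ _)
  rw [intervalIntegral.integral_smul] at this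
  simp [h0] at this
  exact this.symm

theorem wo_order [FiniteDimensional ℝ V] {E : Type} [NormedAddCommGroup E] [NormedSpace ℝ E]
    [CompleteSpace E] (k : ℕ) :
    ∀ (R : ℝ × V → E), ContDiff ℝ ∞ R →
    (∀ u, (fun t => R (t, u)) =O[𝓝[≠] 0] (fun t : ℝ => t ^ k)) →
    ∃ S : ℝ × V → E, ContDiff ℝ ∞ S ∧ ∀ t u, R (t, u) = t ^ k • S (t, u) := by
  induction k with
  | zero => intro R hR _; exact ⟨R, hR, by simp⟩
  | succ k ih =>
    intro R hR hO
    have hRc := hR.continuous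
    have h0 : ∀ u, R (0, u) = 0 := by
      intro u
      have h1 : Tendsto (fun t : ℝ => t ^ (k+1)) (𝓝[≠] 0) (𝓝 0) := by
        have : Continuous (fun t : ℝ => t ^ (k+1)) := by fun_prop
        have := this.tendsto 0
        simp only [ne_eq, Nat.add_eq_zero_iff, one_ne_zero, and_false, not_false_eq_true, zero_pow] at this
        exact this.mono_left nhdsWithin_le_nhds
      have h2 := (hO u).trans_tendsto h1
      have h3 : Tendsto (fun t => R (t, u)) (𝓝[≠] 0) (𝓝 (R (0, u))) :=
        ((by fun_prop : Continuous fun t => R (t, u)).tendsto 0).mono_left nhdsWithin_le_nhds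
      exact tendsto_nhds_unique h3 h2
    obtain ⟨g, hg, hgR⟩ := wo_hadamard R hR h0
    obtain ⟨S, hS, hSg⟩ := ih g hg (by
      intro u
      obtain ⟨C, hC⟩ := (hO u).bound
      refine IsBigO.of_bound C ?_
      filter_upwards [hC, self_mem_nhdsWithin] with t ht ht0
      rw [hgR, norm_smul, pow_succ', norm_mul, mul_left_comm] at ht
      exact le_of_mul_le_mul_left ht (norm_pos_iff.2 ht0))
    exact ⟨S, hS, fun t u => by rw [hgR, hSg, smul_smul, pow_succ']⟩

theorem wo_oddDiv [FiniteDimensional ℝ V] (f : ℝ × V → ℝ) (hf : ContDiff ℝ ∞ f)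
    (ho : ∀ t u, f (-t, u) = - f (t, u)) :
    ∃ g : ℝ × V → ℝ, ContDiff ℝ ∞ g ∧ (∀ t u, g (-t, u) = g (t, u)) ∧
      ∀ t u, f (t, u) = t * g (t, u) := by
  obtain ⟨g, hg, h⟩ := wo_hadamard f hf (fun u => by
    have := ho 0 u
    rw [neg_zero] at this; linarith)
  refine ⟨fun p => (g p + g (-p.1, p.2)) / 2, ?_, ?_, ?_⟩
  · have : ContDiff ℝ ∞ (fun p : ℝ × V => g (-p.1, p.2)) := hg.comp (by fun_prop)
    fun_prop
  · intro t u; simp only [neg_neg]; ring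
  · intro t u
    have h1 := h t u
    have h2 := h (-t) u
    rw [ho] at h2
    simp only [smul_eq_mul] at h1 h2 ⊢
    linarith

theorem wo_even [FiniteDimensional ℝ V] (H : ℝ × V → ℝ) (hH : ContDiff ℝ ∞ H)
    (he : ∀ t u, H (-t, u) = H (t, u)) :
    ∃ K : ℝ × V → ℝ, (ContDiff ℝ ∞ K ∧ ∀ t u, K (-t, u) = K (t, u)) ∧
      ∀ t u, H (t, u) = H (0, u) + t ^ 2 * K (t, u) := by
  have h0 : ContDiff ℝ ∞ (fun p : ℝ × V => H (0, p.2)) := hH.comp (by fun_prop)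
  obtain ⟨g, hg, h⟩ := wo_hadamard (fun p => H p - H (0, p.2)) (hH.sub h0) (by simp)
  have hg' : ContDiff ℝ ∞ (fun p : ℝ × V => g (-p.1, p.2)) := hg.comp (by fun_prop)
  obtain ⟨K, hK, hKe, hKg⟩ := wo_oddDiv (fun p => (g p - g (-p.1, p.2)) / 2) (by fun_prop)
    (by intro t u; simp only [neg_neg]; ring)
  refine ⟨K, ⟨hK, hKe⟩, fun t u => ?_⟩
  have h1 := h t u
  have h2 := h (-t) u
  have h3 := hKg t u
  simp only [smul_eq_mul, he] at h1 h2 h3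
  rw [pow_two, mul_assoc, ← h3]
  linarith

theorem wo_expand [FiniteDimensional ℝ V] (H : ℝ × V → ℝ) (hH : ContDiff ℝ ∞ H)
    (he : ∀ t u, H (-t, u) = H (t, u)) :
    ∃ b : ℕ → V → ℝ, (∀ k, ContDiff ℝ ∞ (b k)) ∧ ∀ N, ∃ K : ℝ × V → ℝ, ContDiff ℝ ∞ K ∧
      ∀ t u, H (t, u) = ∑ k ∈ Finset.range N, b k u * (t ^ 2) ^ k + (t ^ 2) ^ N * K (t, u) := by
  let T := {H : ℝ × V → ℝ // ContDiff ℝ ∞ H ∧ ∀ t u, H (-t, u) = H (t, u)}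
  have hstep : ∀ A : T, ∃ B : T, ∀ t u, A.1 (t, u) = A.1 (0, u) + t ^ 2 * B.1 (t, u) := by
    intro A
    obtain ⟨K, hK, h⟩ := wo_even A.1 A.2.1 A.2.2
    exact ⟨⟨K, hK⟩, h⟩
  choose nx hnx using hstep
  let s : ℕ → T := fun k => nx^[k] ⟨H, hH, he⟩
  have hs : ∀ k, s (k+1) = nx (s k) := fun k => Function.iterate_succ_apply' nx k _
  refine ⟨fun k u => (s k).1 (0, u), fun k => (s k).2.1.comp (by fun_prop), fun N =>
    ⟨(s N).1, (s N).2.1, fun t u => ?_⟩⟩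
  induction N with
  | zero => simp [s]
  | succ N ih =>
    rw [ih, Finset.sum_range_succ, hs, hnx (s N) t u]
    ring

/-- Smooth functions vanishing to infinite order along `t = 0`. -/
def WoFlat {E : Type} [NormedAddCommGroup E] [NormedSpace ℝ E] (R : ℝ × V → E) : Prop :=
  ∀ k : ℕ, ∃ S : ℝ × V → E, ContDiff ℝ ∞ S ∧ ∀ t u, R (t, u) = t ^ k • S (t, u)

open Classical in
/-- The pull-back by the square root, extended by zero. -/
noncomputable def woP {E : Type} [NormedAddCommGroup E] [NormedSpace ℝ E] (R : ℝ × V → E) :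
    ℝ × V → E := fun p => if 0 < p.1 then R (√p.1, p.2) else 0

theorem wo_flat_deriv {E : Type} [NormedAddCommGroup E] [NormedSpace ℝ E]
    (R : ℝ × V → E) (hR : WoFlat R) :
    ∃ R' : ℝ × V → (ℝ × V →L[ℝ] E), WoFlat R' ∧ ∀ x, HasFDerivAt (woP R) (woP R' x) x := by
  let J1 : ℝ × V →L[ℝ] ℝ × V := (ContinuousLinearMap.inl ℝ ℝ V).comp (ContinuousLinearMap.fst ℝ ℝ V)
  let J2 : ℝ × V →L[ℝ] ℝ × V := (ContinuousLinearMap.inr ℝ ℝ V).comp (ContinuousLinearMap.snd ℝ ℝ V)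
  have hRs : ContDiff ℝ ∞ R := by
    obtain ⟨S, hS, h⟩ := hR 0
    have : R = S := by ext ⟨t, u⟩; simp [h]
    rwa [this]
  refine ⟨fun p => (fderiv ℝ R p).comp ((2 * p.1)⁻¹ • J1 + J2), ?_, ?_⟩
  · intro k
    obtain ⟨S, hS, h⟩ := hR (k + 3)
    have hSd : ContDiff ℝ ∞ (fderiv ℝ S) := hS.fderiv_right (by simp)
    let A : ℝ × V → (ℝ × V →L[ℝ] E) := fun p => p.1 • fderiv ℝ S p +
      ((k : ℝ) + 3) • (ContinuousLinearMap.fst ℝ ℝ V).smulRight (S p)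
    have hA : ContDiff ℝ ∞ A := by
      refine ContDiff.add (contDiff_fst.fun_smul hSd) (contDiff_const.fun_smul ?_)
      exact contDiff_const.smulRight hS
    have hDR : ∀ p : ℝ × V, fderiv ℝ R p = p.1 ^ (k + 2) • A p := by
      intro p
      have hR' : R = fun p : ℝ × V => p.1 ^ (k+3) • S p := by ext ⟨t, u⟩; simp [h]
      have h1 : HasFDerivAt (fun p : ℝ × V => p.1 ^ (k+3))
          (((k + 3 : ℕ) * p.1 ^ (k + 2)) • ContinuousLinearMap.fst ℝ ℝ V) p := by
        have := (hasDerivAt_pow (k+3) p.1).comp_hasFDerivAt p (hasFDerivAt_fst (𝕜 := ℝ) (p := p))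
        exact this
      have h2 : HasFDerivAt S (fderiv ℝ S p) p :=
        (hS.differentiable (by simp)).differentiableAt.hasFDerivAt
      rw [hR', (h1.fun_smul h2).fderiv]
      ext v <;> simp [A, smul_smul, pow_succ] <;> module
    refine ⟨fun p => p.1 • ((2:ℝ)⁻¹ • (A p).comp J1 + p.1 • (A p).comp J2), ?_, ?_⟩
    · refine contDiff_fst.fun_smul ((contDiff_const.fun_smul (hA.clm_comp contDiff_const)).add
        (contDiff_fst.fun_smul (hA.clm_comp contDiff_const)))
    · intro t u
      simp only [hDR]
      rcases eq_or_ne t 0 with rfl | ht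
      · simp
      · have e1 : t ^ (k + 2) * (t⁻¹ * 2⁻¹) = t ^ k * t * 2⁻¹ := by rw [pow_add]; field_simp
        have e2 : t ^ (k + 2) = t ^ k * t * t := by rw [pow_add, pow_two, mul_assoc]
        rw [ContinuousLinearMap.comp_add, ContinuousLinearMap.comp_smul,
          ContinuousLinearMap.smul_comp, ContinuousLinearMap.smul_comp, smul_smul, smul_add,
          smul_add, smul_smul, smul_smul, smul_smul, smul_smul, ← e2, ← e1]
        congr 2
        rw [mul_inv]; ring
  · rintro ⟨s, u⟩
    rcases lt_trichotomy s 0 with hs | rfl | hs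
    · have : woP R =ᶠ[𝓝 (s, u)] fun _ => 0 := by
        filter_upwards [(continuous_fst.tendsto (s, u)).eventually (gt_mem_nhds hs)] with p hp
        simp only [woP]
        rw [if_neg (not_lt.2 (le_of_lt hp))]
      have h0 : ∀ R' : ℝ × V → (ℝ × V →L[ℝ] E), woP R' (s, u) = 0 := fun R' => by
        simp [woP, hs.le]
      rw [h0]
      exact (hasFDerivAt_const (0:E) (s, u)).congr_of_eventuallyEq this
    · obtain ⟨S, hS, h⟩ := hR 4
      have h0 : ∀ R' : ℝ × V → (ℝ × V →L[ℝ] E), woP R' (0, u) = 0 := fun R' => by simp [woP]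
      rw [h0]
      have hP : woP R = fun p => (max p.1 0) ^ 2 • S (√p.1, p.2) := by
        ext ⟨a, b⟩
        simp only [woP]
        split_ifs with ha
        · rw [h, max_eq_left ha.le, show (√a) ^ 4 = ((√a) ^ 2) ^ 2 by ring, Real.sq_sqrt ha.le]
        · rw [max_eq_right (not_lt.1 ha)]; simp
      have hSc := hS.continuous
      have hb : (fun p : ℝ × V => S (√p.1, p.2)) =O[𝓝 (0, u)] (fun _ => (1:ℝ)) :=
        ((by fun_prop : Continuous fun p : ℝ × V => S (√p.1, p.2)).tendsto (0, u)).isBigO_one ℝ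
      have ha : (fun p : ℝ × V => (max p.1 0) ^ 2) =o[𝓝 (0, u)] (fun p => p - (0, u)) := by
        have h1 : (fun p : ℝ × V => (max p.1 0)) =O[𝓝 (0, u)] (fun p => p - (0, u)) := by
          refine IsBigO.of_bound 1 (Eventually.of_forall fun p => ?_)
          have : ‖p.1‖ ≤ ‖p - (0, u)‖ := by
            have := norm_fst_le (p - (0, u))
            rwa [Prod.fst_sub, sub_zero] at this
          rw [one_mul]
          refine le_trans ?_ this
          rw [Real.norm_eq_abs, Real.norm_eq_abs, abs_of_nonneg (le_max_right _ _)]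
          exact max_le (le_abs_self _) (abs_nonneg _)
        have h2 : (fun p : ℝ × V => (max p.1 0)) =o[𝓝 (0, u)] (fun _ => (1:ℝ)) := by
          rw [isLittleO_one_iff]
          have := (by fun_prop : Continuous fun p : ℝ × V => max p.1 0).tendsto (0, u)
          simpa using this
        have := h2.mul_isBigO h1.norm_right
        refine IsLittleO.of_norm_right ?_
        simpa [pow_two] using this
      refine HasFDerivAt.of_isLittleO ?_
      rw [hP]
      have := ha.norm_right.smul_isBigO hb
      refine IsLittleO.of_norm_right ?_
      simpa using this
    · have : woP R =ᶠ[𝓝 (s, u)] fun p => R (√p.1, p.2) := by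
        filter_upwards [(continuous_fst.tendsto (s, u)).eventually (lt_mem_nhds hs)] with p hp
        simp only [woP]
        rw [if_pos hp]
      refine HasFDerivAt.congr_of_eventuallyEq ?_ this
      simp only [woP, if_pos hs]
      have h1 : HasFDerivAt R (fderiv ℝ R (√s, u)) (√s, u) :=
        (hRs.differentiable (by simp)).differentiableAt.hasFDerivAt
      have h2 := ((Real.hasDerivAt_sqrt hs.ne').comp_hasFDerivAt (s, u)
        (hasFDerivAt_fst (𝕜 := ℝ) (p := (s, u)))).prodMk (hasFDerivAt_snd (𝕜 := ℝ) (p := (s, u)))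
      have h3 := h1.comp (s, u) h2
      have e : (2 * √s)⁻¹ • J1 + J2 = ((1 / (2 * √s)) • ContinuousLinearMap.fst ℝ ℝ V).prod
          (ContinuousLinearMap.snd ℝ ℝ V) := by
        ext v <;> simp [J1, J2]
      rw [e]
      exact h3

theorem wo_flat_contDiff (n : ℕ) : ∀ {E : Type} [NormedAddCommGroup E] [NormedSpace ℝ E]
    (R : ℝ × V → E), WoFlat R → ContDiff ℝ n (woP R) := by
  induction n with
  | zero =>
    intro E _ _ R hR
    obtain ⟨R', _, h⟩ := wo_flat_deriv R hR
    rw [Nat.cast_zero, contDiff_zero]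
    exact continuous_iff_continuousAt.2 fun x => (h x).continuousAt
  | succ n ih =>
    intro E _ _ R hR
    obtain ⟨R', hR', h⟩ := wo_flat_deriv R hR
    rw [Nat.cast_add, Nat.cast_one, contDiff_succ_iff_hasFDerivAt]
    exact ⟨woP R', ih R' hR', h⟩
end

section
variable {V : Type} [NormedAddCommGroup V] [NormedSpace ℝ V]

theorem wo_borel (b : ℕ → V → ℝ) (hb : ∀ k, ContDiff ℝ ∞ (b k))
    (hbc : ∀ k, HasCompactSupport (b k)) :
    ∃ Q : ℝ × V → ℝ, ContDiff ℝ ∞ Q ∧ ∀ u N,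
      (fun s => Q (s, u) - ∑ k ∈ Finset.range N, b k u * s ^ k) =O[𝓝 0] (fun s : ℝ => s ^ N) := by
  let χ : ContDiffBump (0:ℝ) := ⟨1/2, 1, by norm_num, by norm_num⟩
  have hχ : ContDiff ℝ ∞ χ := χ.contDiff
  have hχ1 : ∀ x, |x| ≤ 1/2 → χ x = 1 := fun x hx =>
    χ.one_of_mem_closedBall (by simpa [χ] using hx)
  have hχ0 : ∀ x, 1 ≤ |x| → χ x = 0 := fun x hx =>
    χ.zero_of_le_dist (by simpa [χ] using hx)
  let g : ℕ → ℝ × V → ℝ := fun k p => (p.1 ^ k * χ p.1) * b k p.2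
  have hg : ∀ k, ContDiff ℝ ∞ (g k) := fun k =>
    ((contDiff_fst.pow k).mul (hχ.comp contDiff_fst)).mul ((hb k).comp contDiff_snd)
  have hgc : ∀ k, HasCompactSupport (g k) := fun k => by
    refine HasCompactSupport.intro (χ.hasCompactSupport.isCompact.prod (hbc k).isCompact) ?_
    rintro ⟨s, u⟩ hp
    rw [Set.mem_prod, not_and_or] at hp
    rcases hp with hp | hp
    · simp [g, image_eq_zero_of_notMem_tsupport hp]
    · simp [g, image_eq_zero_of_notMem_tsupport hp]
  have hM : ∀ k j, ∃ C, ∀ x, ‖iteratedFDeriv ℝ j (g k) x‖ ≤ C := fun k j =>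
    ((hg k).continuous_iteratedFDeriv (by exact_mod_cast le_top)).bounded_above_of_compact_support
      ((hgc k).iteratedFDeriv j)
  choose M hM using hM
  have hB : ∀ k, ∃ C, ∀ x, ‖b k x‖ ≤ C := fun k =>
    (hb k).continuous.bounded_above_of_compact_support (hbc k)
  choose B hB using hB
  have hM0 : ∀ k j, 0 ≤ M k j := fun k j => (norm_nonneg _).trans (hM k j 0)
  have hB0 : ∀ k, 0 ≤ B k := fun k => (norm_nonneg _).trans (hB k 0)
  let l : ℕ → ℝ := fun k => 2 ^ k * (1 + B k + ∑ j ∈ Finset.range (k+1), M k j)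
  have hs0 : ∀ k, 0 ≤ ∑ j ∈ Finset.range (k+1), M k j := fun k =>
    Finset.sum_nonneg fun j _ => hM0 k j
  have hl1 : ∀ k, 1 ≤ l k := fun k =>
    one_le_mul_of_one_le_of_one_le (one_le_pow₀ (by norm_num)) (by linarith [hB0 k, hs0 k])
  have hl0 : ∀ k, 0 < l k := fun k => one_pos.trans_le (hl1 k)
  have hlB : ∀ k, (l k)⁻¹ * B k ≤ (1/2) ^ k := fun k => by
    rw [inv_mul_le_iff₀ (hl0 k)]
    have : l k * (1/2) ^ k = 1 + B k + ∑ j ∈ Finset.range (k+1), M k j := by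
      simp only [l]; rw [mul_right_comm, ← mul_pow]; norm_num
    rw [this]; linarith [hs0 k]
  have hlM : ∀ k j, j ≤ k → (l k)⁻¹ * M k j ≤ (1/2) ^ k := fun k j hj => by
    rw [inv_mul_le_iff₀ (hl0 k)]
    have : l k * (1/2) ^ k = 1 + B k + ∑ j ∈ Finset.range (k+1), M k j := by
      simp only [l]; rw [mul_right_comm, ← mul_pow]; norm_num
    rw [this]
    have := Finset.single_le_sum (f := M k) (fun i _ => hM0 k i)
      (Finset.mem_range.2 (Nat.lt_succ_of_le hj))
    linarith [hB0 k]
  clear_value l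
  let L : ℕ → (ℝ × V →L[ℝ] ℝ × V) := fun k =>
    (l k • ContinuousLinearMap.fst ℝ ℝ V).prod (ContinuousLinearMap.snd ℝ ℝ V)
  have hL : ∀ k, ‖L k‖ ≤ l k := fun k => by
    refine ContinuousLinearMap.opNorm_le_bound _ (hl0 k).le fun x => ?_
    simp only [L, ContinuousLinearMap.prod_apply, Prod.norm_def]
    refine max_le ?_ ?_
    · simp only [smul_apply, ContinuousLinearMap.coe_fst', norm_smul,
        Real.norm_of_nonneg (hl0 k).le]
      exact mul_le_mul_of_nonneg_left (le_max_left _ _) (hl0 k).le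
    · simp only [ContinuousLinearMap.coe_snd']
      refine (le_max_right ‖x.1‖ ‖x.2‖).trans ?_
      exact le_mul_of_one_le_left (by positivity) (hl1 k)
  let q : ℕ → ℝ × V → ℝ := fun k => ((l k) ^ k)⁻¹ • (g k ∘ L k)
  have hgL : ∀ k, ContDiff ℝ ∞ (g k ∘ L k) := fun k => (hg k).comp (L k).contDiff
  have hq : ∀ k, ContDiff ℝ ∞ (q k) := fun k =>
    (contDiff_const (c := ((l k) ^ k)⁻¹)).smul (hgL k)
  have hqv : ∀ k s u, q k (s, u) = s ^ k * χ (l k * s) * b k u := fun k s u => by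
    have := (hl0 k).ne'
    simp [q, g, L, mul_pow]
    field_simp
  refine ⟨fun x => ∑' k, q k x, ?_, ?_⟩
  · refine contDiff_tsum_of_eventually (N := (⊤ : ℕ∞)) (v := fun _ k => (1/2) ^ k) hq
      (fun _ _ => summable_geometric_two) ?_
    intro j _
    rw [Nat.cofinite_eq_atTop]
    filter_upwards [eventually_gt_atTop j] with k hk x
    have hj : (j : WithTop ℕ∞) ≤ ∞ := by exact_mod_cast le_top
    rw [iteratedFDeriv_const_smul_apply (((hgL k).of_le hj).contDiffAt), norm_smul,
      (L k).iteratedFDeriv_comp_right (hg k) x hj]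
    have h1 := ContinuousMultilinearMap.norm_compContinuousLinearMap_le
      (iteratedFDeriv ℝ j (g k) (L k x)) (fun _ => L k)
    rw [Finset.prod_const, Finset.card_univ, Fintype.card_fin] at h1
    have h2 : ‖(l k ^ k)⁻¹‖ = (l k ^ k)⁻¹ := Real.norm_of_nonneg (by have := hl0 k; positivity)
    rw [h2]
    have hp := hl0 k
    calc (l k ^ k)⁻¹ * _ ≤ (l k ^ k)⁻¹ * (M k j * (l k) ^ j) := by
          gcongr
          refine h1.trans ?_
          gcongr
          · exact hM0 k j
          · exact hM k j _
          · exact hL k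
      _ ≤ (l k ^ k)⁻¹ * (M k j * (l k) ^ (k - 1)) := by
          have := hM0 k j
          gcongr
          · exact hl1 k
          · omega
      _ = (l k)⁻¹ * M k j := by
          obtain ⟨i, rfl⟩ : ∃ i, k = i + 1 := ⟨k - 1, by omega⟩
          rw [Nat.add_sub_cancel, pow_succ]
          field_simp
      _ ≤ _ := hlM k j hk.le
  · intro u N
    have htail : ∀ s k, ‖q (k + (N + 1)) (s, u)‖ ≤ |s| ^ N * (1/2) ^ (k + (N + 1)) := by
      intro s k
      rw [hqv]
      generalize hn : k + (N + 1) = n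
      have hp := hl0 n
      by_cases h : 1 ≤ |l n * s|
      · rw [hχ0 _ h]; simp
      · rw [abs_mul, abs_of_pos hp, not_le] at h
        have hs : |s| ≤ (l n)⁻¹ := by
          rw [← one_div, le_div_iff₀ hp]; linarith
        have hs1 : |s| ≤ 1 := hs.trans (inv_le_one_of_one_le₀ (hl1 n))
        rw [norm_mul, norm_mul, norm_pow, Real.norm_eq_abs, Real.norm_of_nonneg χ.nonneg]
        calc |s| ^ n * χ (l n * s) * ‖b n u‖ ≤ |s| ^ n * 1 * B n := by
              gcongr
              · exact χ.le_one
              · exact hB n u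
          _ = |s| ^ N * (|s| ^ k * |s|) * B n := by rw [← hn]; ring
          _ ≤ |s| ^ N * (1 * (l n)⁻¹) * B n := by
              have := hB0 n
              gcongr
              exact pow_le_one₀ (abs_nonneg _) hs1
          _ = |s| ^ N * ((l n)⁻¹ * B n) := by ring
          _ ≤ _ := by gcongr; exact hlB n
    have hgeo : Summable (fun k => (1/2 : ℝ) ^ (k + (N + 1))) :=
      (summable_nat_add_iff (N + 1)).2 summable_geometric_two
    have hsum : ∀ s, Summable fun k => q k (s, u) := fun s =>
      (summable_nat_add_iff (N + 1)).1 (.of_norm_bounded (hgeo.mul_left _) (htail s))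
    have hnear : ∀ᶠ s in 𝓝 (0:ℝ), ∀ k ∈ Finset.range (N + 1), |l k * s| ≤ 1/2 := by
      rw [eventually_all_finset]
      intro k _
      have : Tendsto (fun s => |l k * s|) (𝓝 0) (𝓝 0) := by
        have := (by fun_prop : Continuous fun s => |l k * s|).tendsto 0
        simpa using this
      exact (this.eventually (gt_mem_nhds (by norm_num : (0:ℝ) < 1/2))).mono fun _ h => h.le
    refine IsBigO.of_bound (‖b N u‖ + ∑' k, (1/2 : ℝ) ^ (k + (N + 1))) ?_
    filter_upwards [hnear] with s hs
    have e1 : ∑' k, q k (s, u) - ∑ k ∈ Finset.range N, b k u * s ^ k =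
        b N u * s ^ N + ∑' k, q (k + (N + 1)) (s, u) := by
      rw [← (hsum s).sum_add_tsum_nat_add (N + 1)]
      have : ∑ k ∈ Finset.range (N+1), q k (s, u) = ∑ k ∈ Finset.range (N+1), b k u * s ^ k :=
        Finset.sum_congr rfl fun k hk => by rw [hqv, hχ1 _ (hs k hk)]; ring
      rw [this, Finset.sum_range_succ]; ring
    rw [e1, norm_pow, Real.norm_eq_abs s]
    have e2 := tsum_of_norm_bounded (hgeo.hasSum.mul_left (|s| ^ N)) (htail s)
    refine (norm_add_le _ _).trans ?_
    rw [norm_mul, norm_pow, Real.norm_eq_abs s]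
    linarith

open scoped Manifold in
theorem wo_evenSq [FiniteDimensional ℝ V] (H : ℝ × V → ℝ) (hH : ContDiff ℝ ∞ H)
    (he : ∀ t u, H (-t, u) = H (t, u)) :
    ∃ G : ℝ × V → ℝ, ContDiff ℝ ∞ G ∧ ∀ t u, H (t, u) = G (t ^ 2, u) := by
  obtain ⟨b, hb, hexp⟩ := wo_expand H hH he
  have hloc : ∀ u₀ : V, ∃ G : ℝ × V → ℝ, ContDiff ℝ ∞ G ∧
      ∀ t, ∀ u ∈ Metric.ball u₀ 1, H (t, u) = G (t ^ 2, u) := by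
    intro u₀
    let ρ : ContDiffBump u₀ := ⟨1, 2, by norm_num, by norm_num⟩
    have hρ : ContDiff ℝ ∞ ρ := ρ.contDiff
    obtain ⟨Q, hQ, hQO⟩ := wo_borel (fun k u => ρ u * b k u) (fun k => hρ.mul (hb k))
      (fun k => ρ.hasCompactSupport.mul_right)
    let R : ℝ × V → ℝ := fun p => ρ p.2 * H p - Q (p.1 ^ 2, p.2)
    have hR : ContDiff ℝ ∞ R := by
      refine ((hρ.comp contDiff_snd).mul hH).sub (hQ.comp ?_)
      fun_prop
    have hflat : WoFlat R := by
      intro N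
      refine wo_order N R hR fun u => ?_
      obtain ⟨K, hK, hKe⟩ := hexp N
      have hKc := hK.continuous
      have htend : Tendsto (fun t : ℝ => t ^ 2) (𝓝[≠] 0) (𝓝 0) := by
        have := (by fun_prop : Continuous fun t : ℝ => t ^ 2).tendsto 0
        simp only [ne_eq, OfNat.ofNat_ne_zero, not_false_eq_true, zero_pow] at this
        exact this.mono_left nhdsWithin_le_nhds
      have h1 := (hQO u N).comp_tendsto htend
      have h2 : (fun t : ℝ => (ρ u * K (t, u))) =O[𝓝[≠] 0] (fun _ => (1:ℝ)) :=
        (((by fun_prop : Continuous fun t : ℝ => (ρ u * K (t, u))).tendsto 0).isBigO_one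
          ℝ).mono nhdsWithin_le_nhds
      have h3 := ((isBigO_refl (fun t : ℝ => (t ^ 2) ^ N) (𝓝[≠] 0)).mul h2)
      have h4 : (fun t : ℝ => (t ^ 2) ^ N) =O[𝓝[≠] 0] (fun t : ℝ => t ^ N) := by
        have h5 : (fun t : ℝ => t ^ N) =O[𝓝[≠] 0] (fun _ => (1:ℝ)) :=
          (((by fun_prop : Continuous fun t : ℝ => t ^ N).tendsto 0).isBigO_one
            ℝ).mono nhdsWithin_le_nhds
        have := (isBigO_refl (fun t : ℝ => t ^ N) (𝓝[≠] 0)).mul h5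
        simp only [mul_one] at this
        refine this.congr_left fun t => by ring
      simp only [mul_one] at h3
      refine ((h3.sub h1).trans h4).congr_left fun t => ?_
      simp only [Function.comp, R, hKe]
      rw [mul_add, Finset.mul_sum]
      simp only [mul_assoc]
      ring
    refine ⟨fun p => Q p + woP R p,
      hQ.add (contDiff_infty.2 fun n => wo_flat_contDiff n R hflat), ?_⟩
    intro t u hu
    have hρ1 : ρ u = 1 := ρ.one_of_mem_closedBall (Metric.ball_subset_closedBall hu)
    rcases eq_or_ne t 0 with rfl | ht
    · obtain ⟨S, _, hS⟩ := hflat 1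
      have := hS 0 u
      simp [R, hρ1] at this
      simp [woP]
      linarith
    · have hp : 0 < t ^ 2 := by positivity
      have ha : H (|t|, u) = H (t, u) := by
        rcases abs_choice t with h | h <;> rw [h]
        exact he t u
      simp only [woP, if_pos hp, Real.sqrt_sq_eq_abs, R, hρ1, sq_abs, ha]
      ring
  obtain ⟨G, hG⟩ := exists_contMDiffMap_forall_mem_convex_of_local (n := (⊤ : ℕ∞))
    (𝓘(ℝ, ℝ × V)) (M := ℝ × V) (F := ℝ)
    (t := fun p => {y | ∀ t, t ^ 2 = p.1 → y = H (t, p.2)}) (by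
      intro p x hx y hy a b _ _ hab t ht
      rw [hx t ht, hy t ht, ← add_smul, hab, one_smul]) (by
      rintro ⟨s₀, u₀⟩
      obtain ⟨G, hG, h⟩ := hloc u₀
      refine ⟨Prod.snd ⁻¹' Metric.ball u₀ 1, continuous_snd.continuousAt.preimage_mem_nhds
        (Metric.ball_mem_nhds _ one_pos), G, hG.contMDiff.contMDiffOn, ?_⟩
      rintro ⟨s, u⟩ hu t rfl
      exact (h t u hu).symm)
  exact ⟨G, G.contMDiff.contDiff, fun t u => (hG (t ^ 2, u) t rfl).symm⟩
end

/-- parametrized Whitney odd-function theorem. A `C^∞` function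
`F(t,u)` on `ℝ × ℝᵐ` which is odd in `t` is of the form `F(t,u) = t·G(t², u)` for a
`C^∞` function `G`. -/
theorem whitney_odd (m : ℕ) (F : ℝ × (Fin m → ℝ) → ℝ) (hF : ContDiff ℝ ∞ F)
    (hodd : ∀ (t : ℝ) (u : Fin m → ℝ), F (-t, u) = -F (t, u)) :
    ∃ G : ℝ × (Fin m → ℝ) → ℝ, ContDiff ℝ ∞ G ∧
      ∀ (t : ℝ) (u : Fin m → ℝ), F (t, u) = t * G (t ^ 2, u) := by
  obtain ⟨H, hH, he, hFH⟩ := wo_oddDiv F hF hodd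
  obtain ⟨G, hG, hHG⟩ := wo_evenSq H hH he
  exact ⟨G, hG, fun t u => by rw [hFH, hHG]⟩
end
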